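/- For every integer n ≥ 11, one has |B_n/E_n − 1| ≤ e^{−W(n+1)}/11 and e^{−W(n+1)}/11 ≤ (ln n)/(11·n). -/

import Mathlib

/-- Principal branch of the Lambert W function on `[0, ∞)`: for `x ≥ 0`,
`lambertW x` is the unique `y ≥ 0` with `y * exp y = x`. -/
noncomputable def lambertW (x : ℝ) : ℝ := Function.invFun (fun y : ℝ => y * Real.exp y) x

/-- Bell numbers: `Bell 0 = 1` and `Bell (n+1) = ∑_{k=0}^{n} C(n,k) * Bell k`. -/
def Bell : ℕ → ℕ
  | 0 => 1
  | n + 1 => ∑ k ∈ (Finset.range (n + 1)).attach, (n.choose k.1) * Bell k.1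
decreasing_by exact Finset.mem_range.mp k.2

/-- `E n = n! * exp(e^R - 1) / (R^n * sqrt(2π(n+1)(R+1)))` with `R = W(n+1)`. -/
noncomputable def E (n : ℕ) : ℝ :=
  (Nat.factorial n : ℝ) * Real.exp (Real.exp (lambertW (n + 1)) - 1) /
    ((lambertW (n + 1)) ^ n * Real.sqrt (2 * Real.pi * (n + 1) * (lambertW (n + 1) + 1)))

/-!
On the circle `|z| = R` through the saddle point `R * exp R = n + 1`, Cauchy's formula for the
generating function `exp (exp z - 1)` writes `Bell n / E n` as a normalised integral
`∫ exp (Ψ θ) * exp (i θ)` over `[-π, π]`, where `Ψ` has Taylor coefficients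
`exp R * touchard R j * i ^ j / j !` for `j ≥ 2`. For `|θ| ≤ 0.7 / R`, expanding to sixth order
compares the integrand with a Gaussian times an even polynomial; elsewhere the integrand is at most
`exp (-5 * R)`. The Gaussian moments give `Bell n / E n = 1 + c(R) * exp (-R) + O(exp (-2 * R))`.
The constant `1 / 11` is possible because `-1 / 12 < c(R) ≤ 0`, and the estimates close once
`R ≥ 5`, that is, for `n ≥ 742`.

For `11 ≤ n ≤ 741` the inequality is squared and checked in integer arithmetic, enclosing `W(n + 1)`
in an interval of length `2 ^ (-25)` and generating the Bell numbers by the Bell triangle.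
-/

open Real Set Finset MeasureTheory
open scoped Nat

/-! ### The Lambert function -/

theorem strictMonoOn_mul_exp : StrictMonoOn (fun y : ℝ => y * exp y) (Ici 0) :=
  fun _ ha _ _ hab => mul_lt_mul'' hab (exp_lt_exp.mpr hab) ha (exp_pos _).le

theorem lambertW_mul_exp {x : ℝ} (hx : 0 ≤ x) : lambertW x * exp (lambertW x) = x := by
  have hcont : Continuous fun y : ℝ => y * exp y := by fun_prop
  have hmem : x ∈ Icc (0 * exp 0) (x * exp x) :=
    ⟨by simpa using hx, le_mul_of_one_le_right hx (one_le_exp hx)⟩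
  obtain ⟨y, -, hy⟩ := intermediate_value_Icc hx hcont.continuousOn hmem
  exact Function.invFun_eq (f := fun y : ℝ => y * exp y) ⟨y, hy⟩

theorem lambertW_nonneg {x : ℝ} (hx : 0 ≤ x) : 0 ≤ lambertW x :=
  nonneg_of_mul_nonneg_left ((lambertW_mul_exp hx).symm ▸ hx) (exp_pos _)

theorem lambertW_pos {x : ℝ} (hx : 0 < x) : 0 < lambertW x :=
  pos_of_mul_pos_left ((lambertW_mul_exp hx.le).symm ▸ hx) (exp_pos _).le

theorem lambertW_le_iff {x r : ℝ} (hx : 0 ≤ x) (hr : 0 ≤ r) : lambertW x ≤ r ↔ x ≤ r * exp r := by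
  simpa only [lambertW_mul_exp hx] using
    (strictMonoOn_mul_exp.le_iff_le (lambertW_nonneg hx) hr).symm

theorem le_lambertW_iff {x r : ℝ} (hx : 0 ≤ x) (hr : 0 ≤ r) : r ≤ lambertW x ↔ r * exp r ≤ x := by
  simpa only [lambertW_mul_exp hx] using
    (strictMonoOn_mul_exp.le_iff_le hr (lambertW_nonneg hx)).symm

theorem lambertW_le_lambertW {x y : ℝ} (hx : 0 ≤ x) (hxy : x ≤ y) : lambertW x ≤ lambertW y := by
  rwa [le_lambertW_iff (hx.trans hxy) (lambertW_nonneg hx), lambertW_mul_exp hx]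

theorem exp_neg_lambertW {x : ℝ} (hx : 0 < x) : exp (-lambertW x) = lambertW x / x := by
  rw [exp_neg, eq_div_iff hx.ne', inv_mul_eq_iff_eq_mul₀ (exp_ne_zero _), mul_comm,
    lambertW_mul_exp hx.le]

theorem lambertW_le_log {x : ℝ} (hx : exp 1 ≤ x) : lambertW x ≤ log x := by
  have hx0 : 0 < x := (exp_pos 1).trans_le hx
  have hlog : 1 ≤ log x := (le_log_iff_exp_le hx0).mpr hx
  rw [lambertW_le_iff hx0.le (zero_le_one.trans hlog), exp_log hx0]
  exact le_mul_of_one_le_left hx0.le hlog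

theorem exp_neg_lambertW_le_log_div {x y : ℝ} (hx : exp 1 ≤ x) (hxy : x ≤ y) :
    exp (-lambertW y) ≤ log x / x := by
  have hx0 : 0 < x := (exp_pos 1).trans_le hx
  calc exp (-lambertW y) ≤ exp (-lambertW x) := by gcongr; exact lambertW_le_lambertW hx0.le hxy
    _ = lambertW x / x := exp_neg_lambertW hx0
    _ ≤ log x / x := by gcongr; exact lambertW_le_log hx

/-! ### The Bell triangle -/

theorem Bell_succ (n : ℕ) : Bell (n + 1) = ∑ k ∈ range (n + 1), n.choose k * Bell k := by
  rw [Bell]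
  exact sum_attach (range (n + 1)) fun k => n.choose k * Bell k

/-- The entries of the Bell triangle: `bellTriangle m k` is the `k`-fold iterated sum
`f ↦ f (· + 1) + f` of the Bell sequence, evaluated at `m`. -/
def bellTriangle (m k : ℕ) : ℕ := ∑ j ∈ range (k + 1), k.choose j * Bell (m + j)

theorem bellTriangle_zero_right (m : ℕ) : bellTriangle m 0 = Bell m := by simp [bellTriangle]

theorem bellTriangle_zero_left (k : ℕ) : bellTriangle 0 k = Bell (k + 1) := by
  simp [bellTriangle, Bell_succ]

theorem bellTriangle_succ_right (m k : ℕ) :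
    bellTriangle m (k + 1) = bellTriangle (m + 1) k + bellTriangle m k := by
  have hshift : ∀ j, Bell (m + (j + 1)) = Bell (m + 1 + j) := fun j => by congr 1; ring
  simp only [bellTriangle]
  rw [sum_range_succ', sum_range_succ' (fun j => k.choose j * Bell (m + j))]
  simp only [Nat.choose_succ_succ, add_mul, sum_add_distrib, hshift]
  rw [sum_range_succ (fun j => k.choose (j + 1) * _), Nat.choose_succ_self,
    Nat.choose_zero_right, Nat.choose_zero_right]
  ring

/-- The antidiagonal `[bellTriangle (m - 1) k, …, bellTriangle 0 (k + m - 1)]`. -/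
def bellDiagonal : ℕ → ℕ → List ℕ
  | 0, _ => []
  | m + 1, k => bellTriangle m k :: bellDiagonal m (k + 1)

theorem getLastD_bellDiagonal_succ (m k d : ℕ) :
    (bellDiagonal (m + 1) k).getLastD d = Bell (k + m + 1) := by
  induction m generalizing k d with
  | zero => rw [bellDiagonal, bellDiagonal, List.getLastD_cons, List.getLastD_nil,
      bellTriangle_zero_left, add_zero]
  | succ m ih => rw [bellDiagonal, List.getLastD_cons, ih, add_right_comm k 1 m, add_assoc k m 1]

/-- `prefixSums s [a₁, …, aₙ] = [s, s + a₁, …, s + a₁ + ⋯ + aₙ]`. -/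
def prefixSums : ℕ → List ℕ → List ℕ
  | s, [] => [s]
  | s, a :: l => s :: prefixSums (s + a) l

theorem prefixSums_bellDiagonal (m k : ℕ) :
    prefixSums (bellTriangle m k) (bellDiagonal m k) = bellDiagonal (m + 1) k := by
  induction m generalizing k with
  | zero => rfl
  | succ m ih => rw [bellDiagonal, prefixSums, ← bellTriangle_succ_right, ih]; rfl

/-- The `n`-th row of the Bell triangle, computed from the previous row by additions only;
its last entry is `Bell n`. -/
def bellRow : ℕ → List ℕ
  | 0 => []
  | n + 1 => prefixSums ((bellRow n).getLastD 1) (bellRow n)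

theorem getLastD_bellDiagonal_zero (n : ℕ) : (bellDiagonal n 0).getLastD 1 = Bell n := by
  cases n with
  | zero => simp [bellDiagonal, Bell]
  | succ n => rw [getLastD_bellDiagonal_succ, zero_add]

theorem bellRow_eq_bellDiagonal (n : ℕ) : bellRow n = bellDiagonal n 0 := by
  induction n with
  | zero => rfl
  | succ n ih =>
    rw [bellRow, ih, getLastD_bellDiagonal_zero, ← bellTriangle_zero_right,
      prefixSums_bellDiagonal]

theorem getLastD_bellRow (n : ℕ) : (bellRow n).getLastD 1 = Bell n := by
  rw [bellRow_eq_bellDiagonal, getLastD_bellDiagonal_zero]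

/-! ### Certified numerics for small `n` -/

/-- A lower bound for `Q * exp (a / Q)`, obtained from `1 + x ≤ exp x` by `k` halvings of the
argument; rounding is downwards at every step. -/
def expLower (Q : ℕ) : ℕ → ℕ → ℕ
  | 0, a => Q + a
  | k + 1, a => expLower Q k (a / 2) ^ 2 / Q

/-- An upper bound for `Q * exp (a / Q)`, obtained from `exp (d + x) ≤ 3 ^ d / (1 - x)` for `d : ℕ`
and `0 ≤ x < 1` by `k` halvings of the argument; rounding is upwards at every step. -/
def expUpper (Q : ℕ) : ℕ → ℕ → ℕ
  | 0, a => 3 ^ (a / Q) * (Q ^ 2 / (Q - a % Q) + 1)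
  | k + 1, a => expUpper Q k ((a + 1) / 2) ^ 2 / Q + 1

section ExpBounds

variable {Q : ℕ} (hQ : 0 < Q)
include hQ

theorem le_expLower (k a : ℕ) : Q ≤ expLower Q k a := by
  induction k generalizing a with
  | zero => exact Nat.le_add_right Q a
  | succ k ih =>
    rw [expLower, Nat.le_div_iff_mul_le hQ, sq]
    exact Nat.mul_le_mul (ih _) (ih _)

theorem expLower_le (k a : ℕ) : (expLower Q k a : ℝ) ≤ Q * exp (a / Q) := by
  have : (0 : ℝ) < Q := mod_cast hQ
  induction k generalizing a with
  | zero =>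
    calc ((Q + a : ℕ) : ℝ) = Q * (a / Q + 1) := by push_cast; field_simp; ring
      _ ≤ Q * exp (a / Q) := by gcongr; exact add_one_le_exp _
  | succ k ih =>
    have hhalf : ((a / 2 : ℕ) : ℝ) ≤ a / 2 := Nat.cast_div_le
    calc ((expLower Q k (a / 2) ^ 2 / Q : ℕ) : ℝ)
        ≤ (expLower Q k (a / 2) : ℝ) ^ 2 / Q := by exact_mod_cast Nat.cast_div_le
      _ ≤ (Q * exp ((a / 2) / Q)) ^ 2 / Q := by gcongr; exact (ih _).trans (by gcongr)
      _ = Q * exp ((a / 2) / Q) ^ 2 := by field_simp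
      _ = Q * exp (a / Q) := by rw [← exp_nat_mul]; congr 2; push_cast; ring

theorem exp_le_three_pow_mul (a : ℕ) :
    exp (a / Q) ≤ 3 ^ (a / Q) * (1 - (a % Q : ℕ) / (Q : ℝ))⁻¹ := by
  have hQ' : (0 : ℝ) < Q := mod_cast hQ
  have hmod : ((a % Q : ℕ) : ℝ) / Q < 1 := (div_lt_one hQ').mpr (mod_cast Nat.mod_lt a hQ)
  have hsplit : (a : ℝ) / Q = (a / Q : ℕ) + (a % Q : ℕ) / (Q : ℝ) := by
    have h : (a : ℝ) = Q * (a / Q : ℕ) + (a % Q : ℕ) := mod_cast (Nat.div_add_mod a Q).symm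
    rw [eq_comm, ← mul_right_inj' hQ'.ne', mul_add, mul_div_cancel₀ _ hQ'.ne',
      mul_div_cancel₀ _ hQ'.ne', h]
  rw [hsplit, exp_add]
  refine mul_le_mul ?_ ?_ (exp_pos _).le (by positivity)
  · rw [← mul_one ((a / Q : ℕ) : ℝ), exp_nat_mul]
    gcongr
    exact exp_one_lt_three.le
  · rw [le_inv_comm₀ (exp_pos _) (sub_pos.mpr hmod), ← exp_neg]
    linarith [add_one_le_exp (-((a % Q : ℕ) / (Q : ℝ)))]

theorem le_expUpper (k a : ℕ) : Q * exp (a / Q) ≤ expUpper Q k a := by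
  have hQ' : (0 : ℝ) < Q := mod_cast hQ
  have div_le_succ : ∀ c d : ℕ, (c : ℝ) / d ≤ (c / d : ℕ) + 1 := fun c d => by
    rw [← Nat.floor_div_eq_div (K := ℝ)]; exact (Nat.lt_floor_add_one _).le
  induction k generalizing a with
  | zero =>
    have hsub : ((Q - a % Q : ℕ) : ℝ) = Q - (a % Q : ℕ) := Nat.cast_sub (Nat.mod_lt a hQ).le
    calc Q * exp (a / Q) ≤ Q * (3 ^ (a / Q) * (1 - (a % Q : ℕ) / (Q : ℝ))⁻¹) := by
          gcongr; exact exp_le_three_pow_mul hQ a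
      _ = 3 ^ (a / Q) * ((Q ^ 2 : ℕ) / (Q - a % Q : ℕ)) := by
          rw [hsub, one_sub_div hQ'.ne', inv_div]; push_cast; ring
      _ ≤ 3 ^ (a / Q) * ((Q ^ 2 / (Q - a % Q) : ℕ) + 1) := by gcongr; exact div_le_succ _ _
      _ = expUpper Q 0 a := by rw [expUpper]; push_cast; rfl
  | succ k ih =>
    have hhalf : (a : ℝ) / 2 ≤ ((a + 1) / 2 : ℕ) := by
      rw [div_le_iff₀ two_pos]; exact_mod_cast (by omega : a ≤ (a + 1) / 2 * 2)
    calc Q * exp (a / Q) = Q * exp ((a / 2) / Q) ^ 2 := by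
          rw [← exp_nat_mul]; congr 2; push_cast; ring
      _ = (Q * exp ((a / 2) / Q)) ^ 2 / Q := by field_simp
      _ ≤ (expUpper Q k ((a + 1) / 2) : ℝ) ^ 2 / Q := by
          gcongr; exact le_trans (by gcongr) (ih _)
      _ ≤ expUpper Q (k + 1) a := by rw [expUpper]; exact_mod_cast div_le_succ _ _

end ExpBounds

/-- The square of `R ^ n * √(2π(n + 1)(R + 1))`, the denominator in `E n`. -/
noncomputable def saddleDenomSq (n : ℕ) (R : ℝ) : ℝ := R ^ (2 * n) * (2 * π * (n + 1) * (R + 1))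

theorem saddleDenomSq_pos (n : ℕ) {R : ℝ} (hR : 0 < R) : 0 < saddleDenomSq n R := by
  unfold saddleDenomSq; positivity

theorem saddleDenomSq_le_saddleDenomSq (n : ℕ) {r s : ℝ} (hr : 0 ≤ r) (hrs : r ≤ s) :
    saddleDenomSq n r ≤ saddleDenomSq n s := by
  have hs : 0 ≤ s := hr.trans hrs
  unfold saddleDenomSq; gcongr

theorem saddleDenomSq_div_mul_pow (n : ℕ) (p : ℝ) {Q : ℝ} (hQ : Q ≠ 0) :
    saddleDenomSq n (p / Q) * Q ^ (2 * n + 1) = p ^ (2 * n) * (2 * π * (n + 1) * (p + Q)) := by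
  rw [saddleDenomSq, div_pow]
  field_simp
  ring

theorem E_pos (n : ℕ) : 0 < E n := by
  have hR : 0 < lambertW (n + 1) := lambertW_pos (by positivity)
  unfold E; positivity

theorem E_sq_mul_saddleDenomSq (n : ℕ) :
    E n ^ 2 * saddleDenomSq n (lambertW (n + 1)) =
      (n ! * exp (exp (lambertW (n + 1)) - 1)) ^ 2 := by
  have hR : 0 < lambertW (n + 1) := lambertW_pos (by positivity)
  unfold E saddleDenomSq
  rw [div_pow, mul_pow (_ ^ n), sq_sqrt (by positivity), ← pow_mul, mul_comm n 2,
    div_mul_cancel₀ _ (by positivity)]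

theorem abs_div_sub_one_le {b e η : ℝ} (he : 0 < e) (hlower : e * (1 - η) ≤ b)
    (hupper : b ≤ e * (1 + η)) : |b / e - 1| ≤ η := by
  rw [abs_le, neg_le_sub_iff_le_add, sub_le_iff_le_add, ← sub_le_iff_le_add, le_div_iff₀ he,
    div_le_iff₀ he, mul_comm, mul_comm _ e, add_comm η]
  exact ⟨hlower, hupper⟩

theorem E_mul_le_of_bracket {n : ℕ} {r s u b c : ℝ} (hr : 0 ≤ r) (hrW : r ≤ lambertW (n + 1))
    (hWs : lambertW (n + 1) ≤ s) (hu : exp (exp s - 1) ≤ u) (hb : 0 ≤ b)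
    (h : (n ! * u * c) ^ 2 ≤ b ^ 2 * saddleDenomSq n r) : E n * c ≤ b := by
  have hD := saddleDenomSq_pos n (lambertW_pos (x := n + 1) (by positivity))
  refine le_of_sq_le_sq (le_of_mul_le_mul_right ?_ hD) hb
  calc (E n * c) ^ 2 * saddleDenomSq n (lambertW (n + 1))
      = (n ! * exp (exp (lambertW (n + 1)) - 1)) ^ 2 * c ^ 2 := by
        rw [← E_sq_mul_saddleDenomSq]; ring
    _ ≤ (n ! * u) ^ 2 * c ^ 2 := by gcongr; exact le_trans (by gcongr) hu
    _ = (n ! * u * c) ^ 2 := by ring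
    _ ≤ b ^ 2 * saddleDenomSq n r := h
    _ ≤ b ^ 2 * saddleDenomSq n (lambertW (n + 1)) := by
        gcongr; exact saddleDenomSq_le_saddleDenomSq n hr hrW

theorem le_E_mul_of_bracket {n : ℕ} {r s l b c : ℝ} (hrW : r ≤ lambertW (n + 1))
    (hWs : lambertW (n + 1) ≤ s) (hl₀ : 0 ≤ l) (hl : l ≤ exp (exp r - 1)) (hc : 0 ≤ c)
    (h : b ^ 2 * saddleDenomSq n s ≤ (n ! * l * c) ^ 2) : b ≤ E n * c := by
  have hR := lambertW_pos (x := n + 1) (by positivity)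
  have hE := E_pos n
  refine le_of_sq_le_sq (le_of_mul_le_mul_right ?_ (saddleDenomSq_pos n hR)) (by positivity)
  calc b ^ 2 * saddleDenomSq n (lambertW (n + 1)) ≤ b ^ 2 * saddleDenomSq n s := by
        gcongr; exact saddleDenomSq_le_saddleDenomSq n hR.le hWs
    _ ≤ (n ! * l * c) ^ 2 := h
    _ ≤ (n ! * exp (exp (lambertW (n + 1)) - 1) * c) ^ 2 := by
        gcongr; exact hl.trans (by gcongr)
    _ = (E n * c) ^ 2 * saddleDenomSq n (lambertW (n + 1)) := by
        rw [mul_pow, ← E_sq_mul_saddleDenomSq]; ring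

/-- Integer inequalities which, for `b = Bell n`, certify the main estimate at `n`: the first two
say that `p / Q ≤ W(n + 1) ≤ q / Q`, the last two compare the squares of `b` and
`E n * (1 ∓ (p / Q) / (11 * (n + 1)))`, enclosing `E n` by monotonicity of its numerator and
denominator in `W(n + 1)` and `π` by six decimals. -/
def IsCertificate (Q k n b p q : ℕ) : Prop :=
  p * expUpper Q k p ≤ (n + 1) * Q ^ 2 ∧
  (n + 1) * Q ^ 2 ≤ q * expLower Q k q ∧
  (n ! * expUpper Q k (expUpper Q k q - Q) * (11 * (n + 1) * Q - p)) ^ 2 * Q ^ (2 * n + 1) * 10 ^ 6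
    ≤ (b * Q * (11 * (n + 1) * Q)) ^ 2 * (p ^ (2 * n) * (2 * 3141592 * (n + 1) * (p + Q))) ∧
  (b * Q * (11 * (n + 1) * Q)) ^ 2 * (q ^ (2 * n) * (2 * 3141593 * (n + 1) * (q + Q)))
    ≤ (n ! * expLower Q k (expLower Q k p - Q) * (11 * (n + 1) * Q + p)) ^ 2 * Q ^ (2 * n + 1) *
      10 ^ 6

instance (Q k n b p q : ℕ) : Decidable (IsCertificate Q k n b p q) :=
  inferInstanceAs (Decidable (_ ∧ _))

namespace IsCertificate

variable {Q k n b p q : ℕ} (hQ : 0 < Q) (hc : IsCertificate Q k n b p q)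
include hQ hc

theorem div_le_lambertW : (p : ℝ) / Q ≤ lambertW (n + 1) := by
  have hQ' : (0 : ℝ) < Q := mod_cast hQ
  have hcert : (p : ℝ) * expUpper Q k p ≤ (n + 1) * Q ^ 2 := mod_cast hc.1
  rw [le_lambertW_iff (by positivity) (by positivity)]
  refine le_of_mul_le_mul_right ?_ (pow_pos hQ' 2)
  calc (p : ℝ) / Q * exp (p / Q) * Q ^ 2 = p * (Q * exp (p / Q)) := by field_simp
    _ ≤ p * expUpper Q k p := by gcongr; exact le_expUpper hQ k p
    _ ≤ (n + 1) * Q ^ 2 := hcert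

theorem lambertW_le_div : lambertW (n + 1) ≤ (q : ℝ) / Q := by
  have hQ' : (0 : ℝ) < Q := mod_cast hQ
  have hcert : ((n : ℝ) + 1) * Q ^ 2 ≤ q * expLower Q k q := mod_cast hc.2.1
  rw [lambertW_le_iff (by positivity) (by positivity)]
  refine le_of_mul_le_mul_right ?_ (pow_pos hQ' 2)
  calc ((n : ℝ) + 1) * Q ^ 2 ≤ q * expLower Q k q := hcert
    _ ≤ q * (Q * exp (q / Q)) := by gcongr; exact expLower_le hQ k q
    _ = (q : ℝ) / Q * exp (q / Q) * Q ^ 2 := by field_simp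

theorem le_mul : p ≤ 11 * (n + 1) * Q := by
  have hQ' : (0 : ℝ) < Q := mod_cast hQ
  have hW : lambertW ((n : ℝ) + 1) ≤ n + 1 := by
    rw [lambertW_le_iff (by positivity) (by positivity)]
    exact le_mul_of_one_le_right (by positivity) (one_le_exp (by positivity))
  have hp : (p : ℝ) ≤ (n + 1) * Q := (div_le_iff₀ hQ').mp ((hc.div_le_lambertW hQ).trans hW)
  have hmul : ((n : ℝ) + 1) * Q ≤ 11 * (n + 1) * Q := by gcongr; linarith
  exact_mod_cast hp.trans hmul

theorem E_mul_one_sub_le : E n * (1 - p / Q / (11 * (n + 1))) ≤ b := by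
  have hQ' : (0 : ℝ) < Q := mod_cast hQ
  set u := expUpper Q k (expUpper Q k q - Q)
  have hu : exp (exp (q / Q) - 1) ≤ (u : ℝ) / Q := by
    rw [le_div_iff₀' hQ']
    refine le_trans ?_ (le_expUpper hQ k (expUpper Q k q - Q))
    gcongr
    rw [le_div_iff₀' hQ', mul_sub, mul_one, sub_le_iff_le_add]
    exact (le_expUpper hQ k q).trans (mod_cast le_tsub_add)
  refine E_mul_le_of_bracket (by positivity) (hc.div_le_lambertW hQ) (hc.lambertW_le_div hQ) hu
    (by positivity) ?_
  have hcert := (Nat.cast_le (α := ℝ)).mpr hc.2.2.1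
  push_cast [Nat.cast_sub (hc.le_mul hQ)] at hcert
  have hscale : (0 : ℝ) < (Q * (11 * (n + 1) * Q)) ^ 2 * Q ^ (2 * n + 1) * 10 ^ 6 := by positivity
  refine le_of_mul_le_mul_right ?_ hscale
  calc (n ! * (u / Q) * (1 - p / Q / (11 * (n + 1)))) ^ 2 *
        ((Q * (11 * (n + 1) * Q)) ^ 2 * (Q : ℝ) ^ (2 * n + 1) * 10 ^ 6)
      = (n ! * u * (11 * (n + 1) * Q - p)) ^ 2 * (Q : ℝ) ^ (2 * n + 1) * 10 ^ 6 := by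
        field_simp
    _ ≤ (b * Q * (11 * (n + 1) * Q)) ^ 2 *
        ((p : ℝ) ^ (2 * n) * (2 * 3141592 * (n + 1) * (p + Q))) := by linarith
    _ ≤ (b * Q * (11 * (n + 1) * Q)) ^ 2 *
        ((p : ℝ) ^ (2 * n) * (2 * (π * 10 ^ 6) * (n + 1) * (p + Q))) := by
        gcongr; linarith [pi_gt_d6]
    _ = (b * Q * (11 * (n + 1) * Q)) ^ 2 * (saddleDenomSq n (p / Q) * Q ^ (2 * n + 1)) *
        10 ^ 6 := by rw [saddleDenomSq_div_mul_pow n _ hQ'.ne']; ring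
    _ = _ := by ring

theorem le_E_mul_one_add : b ≤ E n * (1 + p / Q / (11 * (n + 1))) := by
  have hQ' : (0 : ℝ) < Q := mod_cast hQ
  set l := expLower Q k (expLower Q k p - Q)
  have hl : (l : ℝ) / Q ≤ exp (exp (p / Q) - 1) := by
    rw [div_le_iff₀' hQ']
    refine (expLower_le hQ k (expLower Q k p - Q)).trans ?_
    gcongr
    rw [div_le_iff₀' hQ', mul_sub, mul_one, Nat.cast_sub (le_expLower hQ k p)]
    exact sub_le_sub_right (expLower_le hQ k p) _
  refine le_E_mul_of_bracket (hc.div_le_lambertW hQ) (hc.lambertW_le_div hQ) (by positivity) hl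
    (by positivity) ?_
  have hcert := (Nat.cast_le (α := ℝ)).mpr hc.2.2.2
  push_cast at hcert
  have hscale : (0 : ℝ) < (Q * (11 * (n + 1) * Q)) ^ 2 * Q ^ (2 * n + 1) * 10 ^ 6 := by positivity
  refine le_of_mul_le_mul_right ?_ hscale
  calc (b : ℝ) ^ 2 * saddleDenomSq n (q / Q) *
        ((Q * (11 * (n + 1) * Q)) ^ 2 * (Q : ℝ) ^ (2 * n + 1) * 10 ^ 6)
      = (b * Q * (11 * (n + 1) * Q)) ^ 2 * (saddleDenomSq n (q / Q) * Q ^ (2 * n + 1)) *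
        10 ^ 6 := by ring
    _ = (b * Q * (11 * (n + 1) * Q)) ^ 2 *
        ((q : ℝ) ^ (2 * n) * (2 * (π * 10 ^ 6) * (n + 1) * (q + Q))) := by
        rw [saddleDenomSq_div_mul_pow n _ hQ'.ne']; ring
    _ ≤ (b * Q * (11 * (n + 1) * Q)) ^ 2 *
        ((q : ℝ) ^ (2 * n) * (2 * 3141593 * (n + 1) * (q + Q))) := by gcongr; linarith [pi_lt_d6]
    _ ≤ (n ! * l * (11 * (n + 1) * Q + p)) ^ 2 * (Q : ℝ) ^ (2 * n + 1) * 10 ^ 6 := by linarith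
    _ = _ := by field_simp

theorem abs_div_E_sub_one_le : |b / E n - 1| ≤ exp (-lambertW (n + 1)) / 11 := by
  have hη : (p : ℝ) / Q / (11 * (n + 1)) ≤ exp (-lambertW (n + 1)) / 11 := by
    rw [exp_neg_lambertW (by positivity), div_div _ _ (11 : ℝ), mul_comm (_ + _ : ℝ)]
    exact div_le_div_of_nonneg_right (hc.div_le_lambertW hQ) (by positivity)
  exact (abs_div_sub_one_le (E_pos n) (hc.E_mul_one_sub_le hQ) (hc.le_E_mul_one_add hQ)).trans hη

end IsCertificate

/-- One step of Newton's method for `y * exp y = n`, in units of `2 ^ (-64)`. -/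
def newtonStep (n p : ℕ) : ℕ :=
  (p ^ 2 * expLower (2 ^ 64) 32 p + n * 2 ^ 192) / (expLower (2 ^ 64) 32 p * (2 ^ 64 + p))

/-- An approximation to `2 ^ 64 * W(n)`. Its accuracy is never proved: `IsCertificate` checks the
enclosure of `W(n)` which results from it. -/
def lambertGuess : ℕ → ℕ
  | 0 => 0
  | n + 1 => (newtonStep (n + 1))^[3] (lambertGuess n)

theorem isCertificate_lambertGuess : ∀ n ∈ List.range' 11 731,
    IsCertificate (2 ^ 64) 32 n ((bellRow n).getLastD 1)
      (lambertGuess (n + 1) - 2 ^ 38) (lambertGuess (n + 1) + 2 ^ 38) := by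
  decide +kernel

theorem abs_Bell_div_E_sub_one_le_of_le {n : ℕ} (hn : 11 ≤ n) (hn' : n ≤ 741) :
    |Bell n / E n - 1| ≤ exp (-lambertW (n + 1)) / 11 := by
  have hc := isCertificate_lambertGuess n (List.mem_range'_1.mpr ⟨hn, by omega⟩)
  rw [getLastD_bellRow] at hc
  exact hc.abs_div_E_sub_one_le (by norm_num)

/-! ### The contour integral -/

theorem integral_circleMap_inv_pow_mul {f : ℂ → ℂ} (hf : Differentiable ℂ f) {R : ℝ} (hR : 0 < R)
    (n : ℕ) : ∫ θ in -π..π, (circleMap 0 R θ)⁻¹ ^ n * f (circleMap 0 R θ) =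
      2 * π / n ! * iteratedDeriv n f 0 := by
  have hcauchy := hf.differentiableOn.circleIntegral_one_div_sub_center_pow_smul (c := 0) hR n
  have hintegrand (θ : ℝ) : deriv (circleMap 0 R) θ •
      (1 / (circleMap 0 R θ - 0) ^ (n + 1)) • f (circleMap 0 R θ) =
        Complex.I * ((circleMap 0 R θ)⁻¹ ^ n * f (circleMap 0 R θ)) := by
    have : circleMap 0 R θ ≠ 0 := circleMap_ne_center hR.ne'
    simp only [deriv_circleMap, smul_eq_mul, sub_zero, inv_pow]
    field_simp
    ring
  have hperiodic : Function.Periodic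
      (fun θ => (circleMap 0 R θ)⁻¹ ^ n * f (circleMap 0 R θ)) (2 * π) :=
    fun θ => by simp only [periodic_circleMap 0 R θ]
  have hshift := hperiodic.intervalIntegral_add_eq 0 (-π)
  rw [zero_add, show -π + 2 * π = π by ring] at hshift
  simp only [circleIntegral, hintegrand, intervalIntegral.integral_const_mul] at hcauchy
  rw [← hshift]
  apply mul_left_cancel₀ Complex.I_ne_zero
  rw [hcauchy, smul_eq_mul]
  ring

theorem iteratedDeriv_exp_exp_sub_one (n : ℕ) :
    iteratedDeriv n (fun z => Complex.exp (Complex.exp z - 1)) 0 = Bell n := by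
  induction n using Nat.strong_induction_on with
  | _ n ih =>
    cases n with
    | zero => simp [Bell]
    | succ n =>
      have hderiv : deriv (fun z => Complex.exp (Complex.exp z - 1)) =
          (fun z => Complex.exp (Complex.exp z - 1)) * Complex.exp :=
        funext fun z => ((Complex.hasDerivAt_exp z).sub_const 1).cexp.deriv
      rw [iteratedDeriv_succ', hderiv, iteratedDeriv_mul
        (Complex.contDiff_exp.sub contDiff_const).cexp.contDiffAt
        Complex.contDiff_exp.contDiffAt, Bell_succ, Nat.cast_sum]
      refine Finset.sum_congr rfl fun k hk => ?_
      rw [ih k (Finset.mem_range.mp hk), iteratedDeriv_eq_iterate, Complex.iter_deriv_exp]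
      simp

/-- The exponent of the integrand of `Bₙ` on the circle of radius `R`, normalised to vanish at
`θ = 0` and with its linear term removed. At the saddle point `R * exp R = n + 1` the integrand is
`exp (saddleExponent R θ + θ * I)`, up to a constant factor. -/
noncomputable def saddleExponent (R θ : ℝ) : ℂ :=
  Complex.exp (R * Complex.exp (θ * Complex.I)) - exp R - exp R * R * θ * Complex.I

/-- The real part of the normalised integrand of `Bₙ` at the saddle point; the imaginary part is
odd in `θ` and does not contribute. -/
noncomputable def saddleIntegrand (R θ : ℝ) : ℝ :=
  exp (saddleExponent R θ).re * cos ((saddleExponent R θ).im + θ)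

theorem continuous_saddleExponent (R : ℝ) : Continuous (saddleExponent R) := by
  unfold saddleExponent; fun_prop

theorem continuous_saddleIntegrand (R : ℝ) : Continuous (saddleIntegrand R) := by
  have := continuous_saddleExponent R
  unfold saddleIntegrand
  fun_prop

theorem saddleExponent_re (R θ : ℝ) :
    (saddleExponent R θ).re = exp R * (exp (-(R * (1 - cos θ))) * cos (R * sin θ) - 1) := by
  have hexp : exp (R * cos θ) = exp R * exp (-(R * (1 - cos θ))) := by rw [← exp_add]; ring_nf
  have hre : (R * Complex.exp (θ * Complex.I)).re = R * cos θ := by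
    rw [Complex.re_ofReal_mul, Complex.exp_ofReal_mul_I_re]
  have him : (R * Complex.exp (θ * Complex.I)).im = R * sin θ := by
    rw [Complex.im_ofReal_mul, Complex.exp_ofReal_mul_I_im]
  simp only [saddleExponent, Complex.sub_re, Complex.exp_re (R * _), hre, him, hexp,
    Complex.ofReal_re, ← Complex.ofReal_mul, Complex.re_ofReal_mul, Complex.I_re]
  ring

theorem re_exp_saddleExponent (R θ : ℝ) :
    (Complex.exp (saddleExponent R θ + θ * Complex.I)).re = saddleIntegrand R θ := by
  simp [saddleIntegrand, Complex.exp_re]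

theorem circleMap_inv_pow_mul_exp_exp {n : ℕ} {R : ℝ} (hR : 0 < R) (hn : R * exp R = n + 1)
    (θ : ℝ) : (circleMap 0 R θ)⁻¹ ^ n * Complex.exp (Complex.exp (circleMap 0 R θ) - 1) =
      (exp (exp R - 1) / R ^ n : ℝ) * Complex.exp (saddleExponent R θ + θ * Complex.I) := by
  have hphase : saddleExponent R θ + θ * Complex.I = Complex.exp (circleMap 0 R θ) - 1 -
      (exp R - 1 : ℝ) - n * (θ * Complex.I) := by
    have hn' : (exp R * R : ℂ) = n + 1 := by rw [mul_comm]; exact_mod_cast hn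
    rw [saddleExponent, hn', circleMap_zero]
    push_cast
    ring
  have : (R : ℂ) ≠ 0 := mod_cast hR.ne'
  rw [hphase, Complex.exp_sub _ (n * _), Complex.exp_nat_mul, Complex.exp_sub _ (_ : ℝ),
    ← Complex.ofReal_exp (exp R - 1), circleMap_zero]
  have : ((exp (exp R - 1) : ℝ) : ℂ) ≠ 0 := mod_cast (exp_pos _).ne'
  rw [Complex.ofReal_div, Complex.ofReal_pow, inv_pow, mul_pow]
  field_simp

theorem integral_saddleIntegrand {n : ℕ} {R : ℝ} (hR : 0 < R) (hn : R * exp R = n + 1) :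
    ∫ θ in -π..π, saddleIntegrand R θ = 2 * π * Bell n * R ^ n / (n ! * exp (exp R - 1)) := by
  have hdiff : Differentiable ℂ fun z => Complex.exp (Complex.exp z - 1) :=
    (Complex.differentiable_exp.sub_const 1).cexp
  have hcoeff := integral_circleMap_inv_pow_mul hdiff hR n
  simp only [circleMap_inv_pow_mul_exp_exp hR hn, intervalIntegral.integral_const_mul,
    iteratedDeriv_exp_exp_sub_one] at hcoeff
  have hint : IntervalIntegrable
      (fun θ => Complex.exp (saddleExponent R θ + θ * Complex.I)) volume (-π) π := by
    have := continuous_saddleExponent R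
    exact Continuous.intervalIntegrable (by fun_prop) _ _
  have hre := Complex.reCLM.intervalIntegral_comp_comm hint
  have hconst : ∫ θ in -π..π, Complex.exp (saddleExponent R θ + θ * Complex.I) =
      (2 * π * Bell n * R ^ n / (n ! * exp (exp R - 1)) : ℝ) := by
    have hne : ((exp (exp R - 1) / R ^ n : ℝ) : ℂ) ≠ 0 := mod_cast (by positivity)
    apply mul_left_cancel₀ hne
    have : (R : ℂ) ≠ 0 := mod_cast hR.ne'
    rw [hcoeff]
    push_cast
    field_simp
  simpa only [Complex.reCLM_apply, re_exp_saddleExponent, hconst, Complex.ofReal_re] using hre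

/-! ### Taylor expansion of the exponent -/

/-- The remainder of the exponential series after its first `m` terms. -/
noncomputable def expRemainder (m : ℕ) (z : ℂ) : ℂ := Complex.exp z - ∑ j ∈ range m, z ^ j / j !

theorem expRemainder_succ_zero (m : ℕ) : expRemainder (m + 1) 0 = 0 := by
  simp [expRemainder, sum_range_succ']

theorem hasDerivAt_expRemainder_succ (m : ℕ) (z : ℂ) :
    HasDerivAt (expRemainder (m + 1)) (expRemainder m z) z := by
  have hsum : HasDerivAt (fun z : ℂ => ∑ j ∈ range (m + 1), z ^ j / (j ! : ℂ))
      (∑ j ∈ range m, z ^ j / j !) z := by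
    refine (HasDerivAt.fun_sum fun j _ => (hasDerivAt_pow j z).div_const (j ! : ℂ)).congr_deriv ?_
    rw [sum_range_succ', Nat.cast_zero, zero_mul, zero_div, add_zero]
    refine Finset.sum_congr rfl fun j _ => ?_
    rw [Nat.factorial_succ, Nat.add_sub_cancel]
    push_cast
    field_simp
  exact (Complex.hasDerivAt_exp z).sub hsum

theorem norm_expRemainder_le (m : ℕ) (z : ℂ) :
    ‖expRemainder m z‖ ≤ ‖z‖ ^ m / m ! * exp (max 0 z.re) := by
  induction m generalizing z with
  | zero => simp [expRemainder, Complex.norm_exp]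
  | succ m ih =>
    have hderiv (t : ℝ) :
        HasDerivAt (fun t : ℝ => expRemainder (m + 1) (t * z)) (expRemainder m (t * z) * z) t := by
      have hlin : HasDerivAt (fun t : ℝ => t * z) z t := by
        simpa using (Complex.ofRealCLM.hasDerivAt (x := t)).mul_const z
      exact (hasDerivAt_expRemainder_succ m (t * z)).comp t hlin
    have hbound (t : ℝ) (ht : t ∈ Ico (0 : ℝ) 1) : ‖expRemainder m (t * z) * z‖ ≤
        ‖z‖ ^ (m + 1) / (m + 1)! * exp (max 0 z.re) * ((m + 1 : ℕ) * t ^ m) := by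
      have hre : max 0 (t * z).re ≤ max 0 z.re := by
        rw [Complex.re_ofReal_mul]
        refine max_le (le_max_left _ _) ?_
        nlinarith [le_max_left 0 z.re, le_max_right 0 z.re, ht.1, ht.2]
      calc ‖expRemainder m (t * z) * z‖ ≤ ‖t * z‖ ^ m / m ! * exp (max 0 z.re) * ‖z‖ := by
            rw [norm_mul]
            gcongr
            exact (ih _).trans (by gcongr)
        _ = _ := by
          rw [norm_mul, Complex.norm_real, norm_of_nonneg ht.1, Nat.factorial_succ]
          push_cast
          field_simp
          ring
    have hmvt := image_norm_le_of_norm_deriv_right_le_deriv_boundary (a := 0) (b := 1)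
      (fun t _ => (hderiv t).continuousAt.continuousWithinAt)
      (fun t _ => (hderiv t).hasDerivWithinAt)
      (B := fun t => ‖z‖ ^ (m + 1) / (m + 1)! * exp (max 0 z.re) * t ^ (m + 1))
      (by simp [expRemainder_succ_zero]) (fun t => (hasDerivAt_pow (m + 1) t).const_mul _) hbound
      (right_mem_Icc.mpr zero_le_one)
    simpa using hmvt

theorem abs_exp_sub_one_le_mul_exp_abs (x : ℝ) : |exp x - 1| ≤ |x| * exp |x| := by
  have hx : max 0 x ≤ |x| := max_le (abs_nonneg x) (le_abs_self x)
  have h := norm_expRemainder_le 1 x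
  rw [show expRemainder 1 x = (exp x - 1 : ℝ) by simp [expRemainder]] at h
  simp only [Complex.norm_real, norm_eq_abs, Complex.ofReal_re, pow_one, Nat.factorial_one,
    Nat.cast_one, div_one] at h
  exact h.trans (by gcongr)

theorem abs_exp_sub_one_sub_le_mul_exp_abs (x : ℝ) : |exp x - 1 - x| ≤ x ^ 2 / 2 * exp |x| := by
  have hx : max 0 x ≤ |x| := max_le (abs_nonneg x) (le_abs_self x)
  have h := norm_expRemainder_le 2 x
  rw [show expRemainder 2 x = (exp x - 1 - x : ℝ) by
    simp [expRemainder, sum_range_succ, sub_sub]] at h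
  simp only [Complex.norm_real, norm_eq_abs, Complex.ofReal_re, sq_abs, Nat.factorial_two,
    Nat.cast_ofNat] at h
  exact h.trans (by gcongr)

theorem abs_cos_sub_le (x : ℝ) : |cos x - (1 - x ^ 2 / 2)| ≤ x ^ 4 / 24 := by
  have h := (Complex.abs_re_le_norm _).trans (norm_expRemainder_le 4 (x * Complex.I))
  simpa [expRemainder, sum_range_succ, Nat.factorial, Complex.exp_ofReal_mul_I_re, mul_pow,
    ← Complex.ofReal_pow, Even.pow_abs (show Even 4 by decide), neg_div, sub_eq_add_neg] using h

/-- The Touchard polynomials, normalised by `exp R * touchard R j = ∑ k, k ^ j * R ^ k / k !`: the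
moments of the Poisson distribution of mean `R`, with `touchard 1 = Bell`. -/
noncomputable def touchard (R : ℝ) : ℕ → ℝ
  | 0 => 1
  | j + 1 => R * ∑ i : Fin (j + 1), j.choose i * touchard R i

theorem touchard_zero (R : ℝ) : touchard R 0 = 1 := by rw [touchard]

theorem touchard_succ (R : ℝ) (j : ℕ) :
    touchard R (j + 1) = R * ∑ i ∈ range (j + 1), j.choose i * touchard R i := by
  rw [touchard, Fin.sum_univ_eq_sum_range fun i => (j.choose i : ℝ) * touchard R i]

theorem hasSum_pow_mul_pow_div_factorial (R : ℝ) (j : ℕ) :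
    HasSum (fun k : ℕ => (k : ℝ) ^ j * (R ^ k / k !)) (exp R * touchard R j) := by
  induction j using Nat.strong_induction_on with
  | _ j ih =>
    cases j with
    | zero =>
      simpa [touchard_zero, exp_eq_exp_ℝ] using NormedSpace.expSeries_div_hasSum_exp R
    | succ j =>
      have hsum : HasSum (fun k : ℕ => R * ∑ i ∈ range (j + 1),
          j.choose i * ((k : ℝ) ^ i * (R ^ k / k !))) (exp R * touchard R (j + 1)) := by
        rw [touchard_succ, mul_left_comm, mul_sum (a := exp R)]
        simp only [mul_left_comm (exp R)]
        exact (hasSum_sum fun i hi => (ih i (Finset.mem_range.mp hi)).mul_left _).mul_left R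
      rw [← hasSum_nat_add_iff' 1, sum_range_one]
      simp only [Nat.cast_zero, zero_pow j.succ_ne_zero, zero_mul, sub_zero]
      refine hsum.congr_fun fun k => ?_
      rw [Nat.factorial_succ, pow_succ R, Nat.cast_mul, pow_succ _ j, Nat.cast_succ, add_pow,
        sum_mul, sum_mul, mul_sum]
      refine Finset.sum_congr rfl fun i _ => ?_
      rw [one_pow]
      field_simp

theorem touchard_pos {R : ℝ} (hR : 0 < R) (j : ℕ) : 0 < touchard R j := by
  induction j using Nat.strong_induction_on with
  | _ j ih =>
    cases j with
    | zero => simp [touchard_zero]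
    | succ j =>
      rw [touchard_succ]
      refine mul_pos hR (sum_pos (fun i hi => mul_pos ?_ (ih i (Finset.mem_range.mp hi)))
        nonempty_range_add_one)
      exact_mod_cast Nat.choose_pos (Finset.mem_range_succ_iff.mp hi)

theorem hasSum_pow_div_factorial_mul_exp (R θ : ℝ) :
    HasSum (fun k : ℕ => ((R ^ k / k ! : ℝ) : ℂ) * Complex.exp (k * θ * Complex.I))
      (Complex.exp (R * Complex.exp (θ * Complex.I))) := by
  have h := NormedSpace.expSeries_div_hasSum_exp (R * Complex.exp (θ * Complex.I))
  rw [← Complex.exp_eq_exp_ℂ] at h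
  refine h.congr_fun fun k => ?_
  rw [mul_pow, ← Complex.exp_nat_mul]
  push_cast
  ring_nf

theorem norm_exp_circle_sub_sum_le {R : ℝ} (hR : 0 ≤ R) (θ : ℝ) (m : ℕ) :
    ‖Complex.exp (R * Complex.exp (θ * Complex.I)) -
        ∑ j ∈ range m, (exp R * touchard R j : ℝ) * ((θ * Complex.I) ^ j / j !)‖ ≤
      exp R * touchard R m * (|θ| ^ m / m !) := by
  have hsum : HasSum (fun k : ℕ => ((R ^ k / k ! : ℝ) : ℂ) * expRemainder m (k * θ * Complex.I))
      (Complex.exp (R * Complex.exp (θ * Complex.I)) -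
        ∑ j ∈ range m, (exp R * touchard R j : ℝ) * ((θ * Complex.I) ^ j / j !)) := by
    have hpart (j : ℕ) := (Complex.hasSum_ofReal.mpr
      (hasSum_pow_mul_pow_div_factorial R j)).mul_right ((θ * Complex.I) ^ j / j !)
    refine ((hasSum_pow_div_factorial_mul_exp R θ).sub
      (hasSum_sum fun j (_ : j ∈ range m) => hpart j)).congr_fun fun k => ?_
    rw [expRemainder, mul_sub, mul_sum]
    congr 1
    refine Finset.sum_congr rfl fun j _ => ?_
    push_cast
    ring
  refine hsum.norm_le_of_bounded
    ((hasSum_pow_mul_pow_div_factorial R m).mul_right (|θ| ^ m / m !)) fun k => ?_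
  have hrem := norm_expRemainder_le m (k * θ * Complex.I)
  rw [show (k * θ * Complex.I : ℂ) = (k * θ : ℝ) * Complex.I by push_cast; rfl] at hrem ⊢
  rw [norm_mul, Complex.norm_real, norm_of_nonneg (by positivity)]
  refine (mul_le_mul_of_nonneg_left hrem (by positivity)).trans_eq ?_
  simp only [norm_mul, Complex.norm_real, Complex.norm_I, norm_eq_abs, Nat.abs_cast,
    Complex.re_ofReal_mul, Complex.I_re, mul_zero, max_self, exp_zero]
  ring

theorem norm_saddleExponent_sub_sum_le {R : ℝ} (hR : 0 ≤ R) (θ : ℝ) (m : ℕ) :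
    ‖saddleExponent R θ - ∑ j ∈ range m,
        (exp R * touchard R (j + 2) * θ ^ (j + 2) / (j + 2)! : ℝ) * Complex.I ^ (j + 2)‖ ≤
      exp R * touchard R (m + 2) * |θ| ^ (m + 2) / (m + 2)! := by
  have hterm (j : ℕ) : (exp R * touchard R j * θ ^ j / j ! : ℝ) * Complex.I ^ j =
      (exp R * touchard R j : ℝ) * ((θ * Complex.I) ^ j / j !) := by
    push_cast
    ring
  have h := norm_exp_circle_sub_sum_le hR θ (m + 2)
  rw [sum_range_succ', sum_range_succ', ← mul_div_assoc (_ * _) (|θ| ^ _)] at h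
  simp only [hterm]
  convert h using 2
  simp [saddleExponent, touchard_succ R 0, touchard_zero]
  ring

section TaylorParts

variable {R : ℝ} (hR : 0 ≤ R) (θ : ℝ)
include hR

theorem abs_saddleExponent_re_sub_sum_le (m : ℕ) :
    |(saddleExponent R θ).re - ∑ j ∈ range m,
        exp R * touchard R (j + 2) * θ ^ (j + 2) / (j + 2)! * (Complex.I ^ (j + 2)).re| ≤
      exp R * touchard R (m + 2) * |θ| ^ (m + 2) / (m + 2)! := by
  simpa only [Complex.sub_re, Complex.re_sum, Complex.re_ofReal_mul] using
    (Complex.abs_re_le_norm _).trans (norm_saddleExponent_sub_sum_le hR θ m)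

theorem abs_saddleExponent_im_sub_sum_le (m : ℕ) :
    |(saddleExponent R θ).im - ∑ j ∈ range m,
        exp R * touchard R (j + 2) * θ ^ (j + 2) / (j + 2)! * (Complex.I ^ (j + 2)).im| ≤
      exp R * touchard R (m + 2) * |θ| ^ (m + 2) / (m + 2)! := by
  simpa only [Complex.sub_im, Complex.im_sum, Complex.im_ofReal_mul] using
    (Complex.abs_im_le_norm _).trans (norm_saddleExponent_sub_sum_le hR θ m)

theorem abs_saddleExponent_re_add_le :
    |(saddleExponent R θ).re + exp R * touchard R 2 * θ ^ 2 / 2| ≤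
      exp R * touchard R 4 * θ ^ 4 / 24 := by
  have h := abs_saddleExponent_re_sub_sum_le hR θ 2
  norm_num [sum_range_succ, Nat.factorial, Complex.I_pow_three,
    Even.pow_abs (show Even 4 by decide)] at h
  exact h

theorem abs_saddleExponent_re_add_sub_le :
    |(saddleExponent R θ).re + exp R * touchard R 2 * θ ^ 2 / 2 -
        exp R * touchard R 4 * θ ^ 4 / 24| ≤ exp R * touchard R 6 * θ ^ 6 / 720 := by
  have h := abs_saddleExponent_re_sub_sum_le hR θ 4
  norm_num [sum_range_succ, Nat.factorial, Complex.I_pow_three, pow_succ Complex.I 4,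
    sub_add_eq_sub_sub, Even.pow_abs (show Even 6 by decide)] at h
  exact h

theorem abs_saddleExponent_im_le :
    |(saddleExponent R θ).im| ≤ exp R * touchard R 3 * |θ| ^ 3 / 6 := by
  simpa [Nat.factorial] using abs_saddleExponent_im_sub_sum_le hR θ 1

theorem abs_saddleExponent_im_add_le :
    |(saddleExponent R θ).im + exp R * touchard R 3 * θ ^ 3 / 6| ≤
      exp R * touchard R 5 * |θ| ^ 5 / 120 := by
  have h := abs_saddleExponent_im_sub_sum_le hR θ 3
  norm_num [sum_range_succ, Nat.factorial, Complex.I_pow_three] at h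
  exact h

end TaylorParts

theorem touchard_one (R : ℝ) : touchard R 1 = R := by
  simp [touchard_succ, touchard_zero]

theorem touchard_two (R : ℝ) : touchard R 2 = R + R ^ 2 := by
  simp only [touchard_succ R 1, sum_range_succ, sum_range_zero, Nat.choose, touchard_zero,
    touchard_one]
  push_cast
  ring

theorem touchard_three (R : ℝ) : touchard R 3 = R + 3 * R ^ 2 + R ^ 3 := by
  simp only [touchard_succ R 2, sum_range_succ, sum_range_zero, Nat.choose, touchard_zero,
    touchard_one, touchard_two]
  push_cast
  ring

theorem touchard_four (R : ℝ) : touchard R 4 = R + 7 * R ^ 2 + 6 * R ^ 3 + R ^ 4 := by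
  simp only [touchard_succ R 3, sum_range_succ, sum_range_zero, Nat.choose, touchard_zero,
    touchard_one, touchard_two, touchard_three]
  push_cast
  ring

theorem touchard_five (R : ℝ) :
    touchard R 5 = R + 15 * R ^ 2 + 25 * R ^ 3 + 10 * R ^ 4 + R ^ 5 := by
  simp only [touchard_succ R 4, sum_range_succ, sum_range_zero, Nat.choose, touchard_zero,
    touchard_one, touchard_two, touchard_three, touchard_four]
  push_cast
  ring

theorem touchard_six (R : ℝ) :
    touchard R 6 = R + 31 * R ^ 2 + 90 * R ^ 3 + 65 * R ^ 4 + 15 * R ^ 5 + R ^ 6 := by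
  simp only [touchard_succ R 5, sum_range_succ, sum_range_zero, Nat.choose, touchard_zero,
    touchard_one, touchard_two, touchard_three, touchard_four, touchard_five]
  push_cast
  ring

-- The constants of this section are the values at `R = 5` of the ratios they bound, rounded up.
section TouchardBounds

variable {R : ℝ} (hR : 5 ≤ R)
include hR

theorem thirty_le_touchard_two : 30 ≤ touchard R 2 := by
  rw [touchard_two]
  nlinarith

theorem touchard_three_le : touchard R 3 ≤ 0.22782 * touchard R 2 ^ 2 := by
  obtain ⟨r, hr, rfl⟩ := exists_nonneg_add_of_le hR
  rw [touchard_three, touchard_two, ← sub_nonneg]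
  ring_nf
  positivity

theorem touchard_three_sq_le : touchard R 3 ^ 2 ≤ 1.55664 * touchard R 2 ^ 3 := by
  obtain ⟨r, hr, rfl⟩ := exists_nonneg_add_of_le hR
  rw [touchard_three, touchard_two, ← sub_nonneg]
  ring_nf
  positivity

theorem touchard_four_le : touchard R 4 ≤ 1.728 * touchard R 2 ^ 2 := by
  obtain ⟨r, hr, rfl⟩ := exists_nonneg_add_of_le hR
  rw [touchard_four, touchard_two, ← sub_nonneg]
  ring_nf
  positivity

theorem touchard_four_le_mul_touchard_two : touchard R 4 ≤ 2.0734 * R ^ 2 * touchard R 2 := by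
  obtain ⟨r, hr, rfl⟩ := exists_nonneg_add_of_le hR
  rw [touchard_four, touchard_two, ← sub_nonneg]
  ring_nf
  positivity

theorem touchard_five_le : touchard R 5 ≤ 0.47712 * touchard R 2 ^ 3 := by
  obtain ⟨r, hr, rfl⟩ := exists_nonneg_add_of_le hR
  rw [touchard_five, touchard_two, ← sub_nonneg]
  ring_nf
  positivity

theorem touchard_three_mul_touchard_five_le :
    touchard R 3 * touchard R 5 ≤ 3.26016 * touchard R 2 ^ 4 := by
  obtain ⟨r, hr, rfl⟩ := exists_nonneg_add_of_le hR
  rw [touchard_three, touchard_five, touchard_two, ← sub_nonneg]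
  ring_nf
  positivity

theorem touchard_six_le : touchard R 6 ≤ 4.266 * touchard R 2 ^ 3 := by
  obtain ⟨r, hr, rfl⟩ := exists_nonneg_add_of_le hR
  rw [touchard_six, touchard_two, ← sub_nonneg]
  ring_nf
  positivity

end TouchardBounds

/-! ### Comparison with a Gaussian -/

/-- The quadratic form `w = θ² / σ²` of the saddle-point method: the Gaussian factor of the
integrand is `exp (-w / 2)`. -/
noncomputable def scaledSq (R θ : ℝ) : ℝ := exp R * touchard R 2 * θ ^ 2

/-- The Gaussian approximation to `saddleIntegrand`, with its correction of order `exp (-R)` coming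
from the quartic term of the real part and the cubic term of the imaginary part. -/
noncomputable def gaussianApprox (R θ : ℝ) : ℝ :=
  exp (-(scaledSq R θ / 2)) *
    (1 + exp R * touchard R 4 * θ ^ 4 / 24 - (θ - exp R * touchard R 3 * θ ^ 3 / 6) ^ 2 / 2)

/-- A polynomial `q` such that `q (scaledSq R θ) * exp (-R)` bounds the square of the phase of the
integrand. -/
noncomputable def phaseSqBound (w : ℝ) : ℝ := w / 30 + 0.07594 * w ^ 2 + 0.04324 * w ^ 3

/-- The polynomial factor of `gaussianMajorant`. -/
noncomputable def majorantPoly (w : ℝ) : ℝ :=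
  0.00005 * w ^ 2 + 0.012 * w ^ 3 + 0.0112 * w ^ 4 + 0.0019 * w ^ 5 + 0.000088 * w ^ 6

/-- A bound for the error of `gaussianApprox`. The factor `(20 / 21) ^ 2` in the exponent leaves
room for the quartic part of the exponent when `R * |θ| ≤ 0.7`. -/
noncomputable def gaussianMajorant (R θ : ℝ) : ℝ :=
  exp (-((20 / 21) ^ 2 * scaledSq R θ / 2)) * ((exp R)⁻¹ ^ 2 * majorantPoly (scaledSq R θ))

theorem scaledSq_nonneg {R : ℝ} (hR : 0 ≤ R) (θ : ℝ) : 0 ≤ scaledSq R θ := by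
  rw [scaledSq, touchard_two]
  positivity

theorem abs_exp_mul_cos_sub_le (x b κ β : ℝ) :
    |exp x * cos b - (1 + κ - β / 2)| ≤
      exp |x| * (x ^ 2 / 2 + |x| * b ^ 2 / 2 + b ^ 4 / 24 + |x - κ| + |b ^ 2 - β| / 2) := by
  have hcross : |(exp x - 1) * (cos b - 1)| ≤ |x| * exp |x| * (b ^ 2 / 2) := by
    rw [abs_mul, abs_sub_comm (cos b), abs_of_nonneg (sub_nonneg.mpr (cos_le_one b))]
    gcongr
    · exact sub_nonneg.mpr (cos_le_one b)
    · exact abs_exp_sub_one_le_mul_exp_abs x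
    · linarith [one_sub_sq_div_two_le_cos (x := b)]
  have hexp : 1 ≤ exp |x| := one_le_exp (abs_nonneg x)
  have hsplit : exp x * cos b - (1 + κ - β / 2) = (exp x - 1 - x) + (exp x - 1) * (cos b - 1) +
      (cos b - (1 - b ^ 2 / 2)) + (x - κ) - (b ^ 2 - β) / 2 := by ring
  calc |exp x * cos b - (1 + κ - β / 2)|
      ≤ |exp x - 1 - x| + |(exp x - 1) * (cos b - 1)| + |cos b - (1 - b ^ 2 / 2)| + |x - κ| +
          |b ^ 2 - β| / 2 := by
        rw [hsplit, ← abs_two, ← abs_div, abs_two]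
        refine (abs_sub _ _).trans (add_le_add_left ?_ _)
        exact (abs_add_le _ _).trans (add_le_add_left (abs_add_three _ _ _) _)
    _ ≤ x ^ 2 / 2 * exp |x| + |x| * exp |x| * (b ^ 2 / 2) +
          1 * (b ^ 4 / 24 + |x - κ| + |b ^ 2 - β| / 2) := by
        linarith [abs_exp_sub_one_sub_le_mul_exp_abs x, abs_cos_sub_le b]
    _ ≤ x ^ 2 / 2 * exp |x| + |x| * exp |x| * (b ^ 2 / 2) +
          exp |x| * (b ^ 4 / 24 + |x - κ| + |b ^ 2 - β| / 2) := by gcongr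
    _ = _ := by ring

theorem error_sum_le_majorantPoly {w P : ℝ} (hw : 0 ≤ w) :
    (0.072 * w ^ 2 * P) ^ 2 / 2 + 0.072 * w ^ 2 * P * (phaseSqBound w * P) / 2 +
        (phaseSqBound w * P) ^ 2 / 24 + 0.005925 * w ^ 3 * P ^ 2 +
        (0.003976 * w ^ 3 + 0.004528 * w ^ 4) * P ^ 2 ≤
      P ^ 2 * majorantPoly w := by
  rw [phaseSqBound, majorantPoly, ← sub_nonneg]
  ring_nf
  positivity

theorem abs_exp_mul_cos_sub_gaussian_le {a b κ β w P : ℝ} (hw : 0 ≤ w)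
    (hre : |a + w / 2| ≤ 0.072 * w ^ 2 * P) (hre' : |a + w / 2| ≤ (1 - (20 / 21) ^ 2) * w / 2)
    (hκ : |a + w / 2 - κ| ≤ 0.005925 * w ^ 3 * P ^ 2) (hb : b ^ 2 ≤ phaseSqBound w * P)
    (hβ : |b ^ 2 - β| / 2 ≤ (0.003976 * w ^ 3 + 0.004528 * w ^ 4) * P ^ 2) :
    |exp a * cos b - exp (-(w / 2)) * (1 + κ - β / 2)| ≤
      exp (-((20 / 21) ^ 2 * w / 2)) * (P ^ 2 * majorantPoly w) := by
  have hexp : exp a = exp (-(w / 2)) * exp (a + w / 2) := by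
    rw [← exp_add]
    ring_nf
  have hsq : (a + w / 2) ^ 2 ≤ (0.072 * w ^ 2 * P) ^ 2 := by
    rw [← sq_abs]
    gcongr
  have hcross : |a + w / 2| * b ^ 2 ≤ 0.072 * w ^ 2 * P * (phaseSqBound w * P) := by
    gcongr
    exact (abs_nonneg _).trans hre
  have hfourth : b ^ 4 ≤ (phaseSqBound w * P) ^ 2 := by
    rw [show b ^ 4 = (b ^ 2) ^ 2 by ring]
    gcongr
  calc |exp a * cos b - exp (-(w / 2)) * (1 + κ - β / 2)|
      = exp (-(w / 2)) * |exp (a + w / 2) * cos b - (1 + κ - β / 2)| := by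
        rw [hexp, mul_assoc, ← mul_sub, abs_mul, abs_exp]
    _ ≤ exp (-(w / 2)) * (exp |a + w / 2| * ((a + w / 2) ^ 2 / 2 + |a + w / 2| * b ^ 2 / 2 +
          b ^ 4 / 24 + |a + w / 2 - κ| + |b ^ 2 - β| / 2)) := by
        gcongr
        exact abs_exp_mul_cos_sub_le _ _ _ _
    _ = exp (-(w / 2) + |a + w / 2|) * ((a + w / 2) ^ 2 / 2 + |a + w / 2| * b ^ 2 / 2 +
          b ^ 4 / 24 + |a + w / 2 - κ| + |b ^ 2 - β| / 2) := by
        rw [exp_add, mul_assoc]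
    _ ≤ exp (-((20 / 21) ^ 2 * w / 2)) * (P ^ 2 * majorantPoly w) := by
        gcongr
        · linarith
        · linarith [error_sum_le_majorantPoly (P := P) hw]

theorem one_add_error_le_majorantPoly {w P : ℝ} (hw : 72 ≤ w) (hwP : 0.7 ^ 2 ≤ w * P) :
    1 + 0.072 * w ^ 2 * P + phaseSqBound w * P / 2 ≤ P ^ 2 * majorantPoly w := by
  have hw2 : 72 * w ≤ w ^ 2 := by nlinarith
  have hw3 : 72 * w ^ 2 ≤ w ^ 3 := by nlinarith [sq_nonneg w]
  have hdropped :
      0 ≤ P ^ 2 * (0.00005 * w ^ 2 + 0.012 * w ^ 3 + 0.0112 * w ^ 4 + 0.000088 * w ^ 6) := by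
    positivity
  calc 1 + 0.072 * w ^ 2 * P + phaseSqBound w * P / 2
      = 1 + w * P * (1 / 60 + 0.10997 * w + 0.02162 * w ^ 2) := by
        rw [phaseSqBound]
        ring
    _ ≤ w * P * (3 + 1 / 60 + 0.10997 * w + 0.02162 * w ^ 2) := by linarith
    _ ≤ w * P * (0.0019 * 0.7 ^ 2 * (72 * w ^ 2)) := by
        gcongr
        linarith
    _ ≤ w * P * (0.0019 * (w * P) * w ^ 3) := by gcongr
    _ ≤ P ^ 2 * majorantPoly w := by
        rw [majorantPoly]
        linarith

theorem mul_quadratic_le_exp {R : ℝ} (hR : 5 ≤ R) :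
    148 * (1 + (R - 5) + (R - 5) ^ 2 / 2) ≤ exp R := by
  have hfive : 148 ≤ exp 5 :=
    calc (148 : ℝ) ≤ 2.718281 ^ 5 := by norm_num
      _ ≤ exp 1 ^ 5 := by
        gcongr
        linarith [exp_one_gt_d9]
      _ = exp 5 := by rw [← exp_nat_mul]; norm_num
  calc 148 * (1 + (R - 5) + (R - 5) ^ 2 / 2)
      ≤ exp 5 * exp (R - 5) := by
        gcongr
        exact quadratic_le_exp_of_nonneg (by linarith)
    _ = exp R := by rw [← exp_add, add_sub_cancel]

theorem le_exp_of_five_le {R : ℝ} (hR : 5 ≤ R) : 148 ≤ exp R := by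
  nlinarith [mul_quadratic_le_exp hR, sq_nonneg (R - 5)]

theorem abs_saddleExponent_im_add_angle_le {R : ℝ} (hR : 0 ≤ R) (θ : ℝ) :
    |(saddleExponent R θ).im + θ| ≤ |θ| + exp R * touchard R 3 * |θ| ^ 3 / 6 := by
  linarith [abs_add_le (saddleExponent R θ).im θ, abs_saddleExponent_im_le hR θ]

theorem abs_sub_cubic_le {R : ℝ} (hR : 0 < R) (θ : ℝ) :
    |θ - exp R * touchard R 3 * θ ^ 3 / 6| ≤ |θ| + exp R * touchard R 3 * |θ| ^ 3 / 6 := by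
  have hT := touchard_pos hR 3
  refine (abs_sub _ _).trans_eq ?_
  rw [abs_div, abs_mul, abs_mul, abs_pow, abs_exp, abs_of_pos hT,
    abs_of_pos (by norm_num : (0 : ℝ) < 6)]

section PointwiseBounds

variable {R : ℝ} (hR : 5 ≤ R) (θ : ℝ)
include hR

theorem quartic_le_scaledSq_sq :
    exp R * touchard R 4 * θ ^ 4 / 24 ≤ 0.072 * scaledSq R θ ^ 2 * (exp R)⁻¹ := by
  calc exp R * touchard R 4 * θ ^ 4 / 24
      ≤ exp R * (1.728 * touchard R 2 ^ 2) * θ ^ 4 / 24 := by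
        gcongr
        exact touchard_four_le hR
    _ = 0.072 * scaledSq R θ ^ 2 * (exp R)⁻¹ := by
        rw [scaledSq]
        field_simp
        ring

theorem sextic_le_scaledSq_cube :
    exp R * touchard R 6 * θ ^ 6 / 720 ≤ 0.005925 * scaledSq R θ ^ 3 * (exp R)⁻¹ ^ 2 := by
  calc exp R * touchard R 6 * θ ^ 6 / 720
      ≤ exp R * (4.266 * touchard R 2 ^ 3) * θ ^ 6 / 720 := by
        gcongr
        exact touchard_six_le hR
    _ = 0.005925 * scaledSq R θ ^ 3 * (exp R)⁻¹ ^ 2 := by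
        rw [scaledSq]
        field_simp
        ring

variable {θ} in
theorem quartic_le_scaledSq_of_mul_abs_le (hθ : R * |θ| ≤ 0.7) :
    exp R * touchard R 4 * θ ^ 4 / 24 ≤ (1 - (20 / 21) ^ 2) * scaledSq R θ / 2 := by
  have hθsq : R ^ 2 * θ ^ 2 ≤ 0.7 ^ 2 := by
    rw [← sq_abs θ, ← mul_pow]
    gcongr
  calc exp R * touchard R 4 * θ ^ 4 / 24
      ≤ exp R * (2.0734 * R ^ 2 * touchard R 2) * θ ^ 4 / 24 := by
        gcongr
        exact touchard_four_le_mul_touchard_two hR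
    _ = 2.0734 / 24 * scaledSq R θ * (R ^ 2 * θ ^ 2) := by
        rw [scaledSq]
        ring
    _ ≤ 2.0734 / 24 * scaledSq R θ * 0.7 ^ 2 := by
        have := scaledSq_nonneg (by linarith : 0 ≤ R) θ
        gcongr
    _ ≤ (1 - (20 / 21) ^ 2) * scaledSq R θ / 2 := by
        linarith [scaledSq_nonneg (by linarith : 0 ≤ R) θ]

variable {θ} in
theorem sq_le_phaseSqBound {c : ℝ} (hc : |c| ≤ |θ| + exp R * touchard R 3 * |θ| ^ 3 / 6) :
    c ^ 2 ≤ phaseSqBound (scaledSq R θ) * (exp R)⁻¹ := by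
  calc c ^ 2 ≤ (|θ| + exp R * touchard R 3 * |θ| ^ 3 / 6) ^ 2 := by
        rw [← sq_abs c]
        gcongr
    _ = |θ| ^ 2 * 30 / 30 + exp R * |θ| ^ 4 * touchard R 3 / 3 +
          exp R ^ 2 * |θ| ^ 6 * touchard R 3 ^ 2 / 36 := by ring
    _ ≤ |θ| ^ 2 * touchard R 2 / 30 + exp R * |θ| ^ 4 * (0.22782 * touchard R 2 ^ 2) / 3 +
          exp R ^ 2 * |θ| ^ 6 * (1.55664 * touchard R 2 ^ 3) / 36 := by
        gcongr
        · exact thirty_le_touchard_two hR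
        · exact touchard_three_le hR
        · exact touchard_three_sq_le hR
    _ = phaseSqBound (scaledSq R θ) * (exp R)⁻¹ := by
        rw [phaseSqBound, scaledSq, ← sq_abs θ]
        field_simp
        ring

theorem abs_phase_sq_sub_sq_le :
    |((saddleExponent R θ).im + θ) ^ 2 - (θ - exp R * touchard R 3 * θ ^ 3 / 6) ^ 2| / 2 ≤
      (0.003976 * scaledSq R θ ^ 3 + 0.004528 * scaledSq R θ ^ 4) * (exp R)⁻¹ ^ 2 := by
  have hR0 : 0 < R := by linarith
  have hT := touchard_pos hR0 5
  have hT35 := touchard_three_mul_touchard_five_le hR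
  have hsum : |(saddleExponent R θ).im + θ + (θ - exp R * touchard R 3 * θ ^ 3 / 6)| ≤
      2 * (|θ| + exp R * touchard R 3 * |θ| ^ 3 / 6) := by
    refine (abs_add_le _ _).trans ?_
    linarith [abs_saddleExponent_im_add_angle_le hR0.le θ, abs_sub_cubic_le hR0 θ]
  calc _ = |(saddleExponent R θ).im + exp R * touchard R 3 * θ ^ 3 / 6| *
          |(saddleExponent R θ).im + θ + (θ - exp R * touchard R 3 * θ ^ 3 / 6)| / 2 := by
        rw [← abs_mul]
        ring_nf
    _ ≤ exp R * touchard R 5 * |θ| ^ 5 / 120 *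
          (2 * (|θ| + exp R * touchard R 3 * |θ| ^ 3 / 6)) / 2 := by
        gcongr
        exact abs_saddleExponent_im_add_le hR0.le θ
    _ = exp R * touchard R 5 * |θ| ^ 6 / 120 +
          exp R ^ 2 * (touchard R 3 * touchard R 5) * |θ| ^ 8 / 720 := by ring
    _ ≤ exp R * (0.47712 * touchard R 2 ^ 3) * |θ| ^ 6 / 120 +
          exp R ^ 2 * (3.26016 * touchard R 2 ^ 4) * |θ| ^ 8 / 720 := by
        gcongr
        exact touchard_five_le hR
    _ = _ := by
        rw [scaledSq, ← sq_abs θ]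
        field_simp
        ring

variable {θ}

theorem abs_saddleIntegrand_sub_gaussianApprox_le (hθ : R * |θ| ≤ 0.7) :
    |saddleIntegrand R θ - gaussianApprox R θ| ≤ gaussianMajorant R θ := by
  have hR0 : 0 ≤ R := by linarith
  have hre := abs_saddleExponent_re_add_le hR0 θ
  have hre' := abs_saddleExponent_re_add_sub_le hR0 θ
  rw [← scaledSq] at hre hre'
  exact abs_exp_mul_cos_sub_gaussian_le (scaledSq_nonneg hR0 θ)
    (hre.trans (quartic_le_scaledSq_sq hR θ))
    (hre.trans (quartic_le_scaledSq_of_mul_abs_le hR hθ))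
    (hre'.trans (sextic_le_scaledSq_cube hR θ))
    (sq_le_phaseSqBound hR (abs_saddleExponent_im_add_angle_le hR0 θ))
    (abs_phase_sq_sub_sq_le hR θ)

theorem abs_gaussianApprox_le_gaussianMajorant (hθ : 0.7 ≤ R * |θ|) :
    |gaussianApprox R θ| ≤ gaussianMajorant R θ := by
  have hR0 : 0 < R := by linarith
  have hT := touchard_pos hR0 4
  have hexp := le_exp_of_five_le hR
  have hscaled : 0.7 ^ 2 ≤ scaledSq R θ * (exp R)⁻¹ :=
    calc (0.7 : ℝ) ^ 2 ≤ (R * |θ|) ^ 2 := by gcongr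
      _ = R ^ 2 * θ ^ 2 := by rw [mul_pow, sq_abs]
      _ ≤ (R + R ^ 2) * θ ^ 2 := by gcongr; linarith
      _ = scaledSq R θ * (exp R)⁻¹ := by
        rw [scaledSq, touchard_two]
        field_simp
  have hw72 : 72 ≤ scaledSq R θ := by
    rw [← div_eq_mul_inv, le_div_iff₀ (exp_pos R)] at hscaled
    linarith
  rw [gaussianApprox, gaussianMajorant, abs_mul, abs_exp]
  refine mul_le_mul (exp_le_exp.mpr (by linarith)) (le_trans ?_
    (one_add_error_le_majorantPoly (by linarith) hscaled)) (abs_nonneg _) (exp_nonneg _)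
  have hκ := quartic_le_scaledSq_sq hR θ
  have hβ := sq_le_phaseSqBound hR (abs_sub_cubic_le hR0 θ)
  have hκ0 : 0 ≤ exp R * touchard R 4 * θ ^ 4 / 24 := by positivity
  rw [abs_le]
  constructor <;> linarith [sq_nonneg (θ - exp R * touchard R 3 * θ ^ 3 / 6)]

end PointwiseBounds

/-! ### Away from the saddle point -/

theorem exp_mul_cos_le_of_mul_le {R θ : ℝ} (hR : 5 ≤ R) (hlow : 0.7 ≤ R * θ)
    (hupp : R * θ ≤ 4.5) : exp (-(R * (1 - cos θ))) * cos (R * sin θ) ≤ 0.8 := by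
  have hθ : 0 < θ := pos_of_mul_pos_right (by linarith) (by linarith : 0 ≤ R)
  have hsin_low : 0.65 ≤ R * sin θ := by
    have hcube : R * (θ - θ ^ 3 / 6) ≤ R * sin θ := by
      gcongr
      exact (sin_gt_sub_cube hθ).le
    have hθ' : θ ≤ R * θ / 5 := by nlinarith
    nlinarith [mul_pos hθ hθ]
  have hsin_upp : R * sin θ ≤ 4.5 :=
    (mul_le_mul_of_nonneg_left (sin_le hθ.le) (by linarith)).trans hupp
  have hcos : cos (R * sin θ) ≤ 0.8 := by
    rcases le_total (R * sin θ) (π / 2) with hquad | hquad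
    · have hanti : cos (R * sin θ) ≤ cos 0.65 :=
        cos_le_cos_of_nonneg_of_le_pi (by norm_num) (by linarith [pi_pos]) hsin_low
      linarith [(abs_le.mp (abs_cos_sub_le 0.65)).2]
    · linarith [cos_nonpos_of_pi_div_two_le_of_le hquad (by linarith [pi_gt_d2])]
  have hexp : exp (-(R * (1 - cos θ))) ≤ 1 :=
    exp_le_one_iff.mpr (neg_nonpos.mpr (mul_nonneg (by linarith) (sub_nonneg.mpr (cos_le_one θ))))
  nlinarith [exp_pos (-(R * (1 - cos θ)))]

theorem exp_mul_cos_le_of_le_mul {R θ : ℝ} (hR : 0 < R) (hlow : 4.5 ≤ R * θ) (hθ : θ ≤ π) :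
    exp (-(R * (1 - cos θ))) * cos (R * sin θ) ≤ R / (R + 4) := by
  have hθ0 : 0 < θ := pos_of_mul_pos_right (by linarith) hR.le
  have hcos : 0.2 * θ ^ 2 ≤ 1 - cos θ := by
    have hpi : 0.2 ≤ 2 / π ^ 2 := by
      rw [le_div_iff₀ (by positivity)]
      nlinarith [pi_pos, pi_lt_d2]
    have h := cos_le_one_sub_mul_cos_sq (x := θ) (by rwa [abs_of_pos hθ0])
    nlinarith [sq_nonneg θ]
  have hgap : 4 / R ≤ R * (1 - cos θ) := by
    rw [div_le_iff₀ hR]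
    nlinarith [mul_le_mul_of_nonneg_right hcos (sq_nonneg R)]
  calc exp (-(R * (1 - cos θ))) * cos (R * sin θ)
      ≤ exp (-(R * (1 - cos θ))) := mul_le_of_le_one_right (exp_nonneg _) (cos_le_one _)
    _ ≤ exp (-(4 / R)) := by gcongr
    _ ≤ (4 / R + 1)⁻¹ := by
        rw [exp_neg]
        gcongr
        exact add_one_le_exp _
    _ = R / (R + 4) := by
        field_simp
        ring

theorem saddleExponent_re_abs (R θ : ℝ) :
    (saddleExponent R |θ|).re = (saddleExponent R θ).re := by
  rcases abs_choice θ with h | h <;> simp [h, saddleExponent_re]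

theorem saddleExponent_re_le {R θ : ℝ} (hR : 5 ≤ R) (hlow : 0.7 ≤ R * |θ|) (hθ : |θ| ≤ π) :
    (saddleExponent R θ).re ≤ -(5 * R) := by
  have hexp := mul_quadratic_le_exp hR
  rw [← saddleExponent_re_abs, saddleExponent_re]
  rcases le_total (R * |θ|) 4.5 with hmid | hfar
  · have hψ := exp_mul_cos_le_of_mul_le hR hlow hmid
    nlinarith
  · have hψ := exp_mul_cos_le_of_le_mul (by linarith) hfar hθ
    calc _ ≤ exp R * (R / (R + 4) - 1) := by gcongr
      _ = -(4 * exp R / (R + 4)) := by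
        have : R + 4 ≠ 0 := by linarith
        field_simp
        ring
      _ ≤ -(5 * R) := by
        rw [neg_le_neg_iff, le_div_iff₀ (by linarith)]
        nlinarith

theorem abs_saddleIntegrand_le {R θ : ℝ} (hR : 5 ≤ R) (hlow : 0.7 ≤ R * |θ|) (hθ : |θ| ≤ π) :
    |saddleIntegrand R θ| ≤ (exp R)⁻¹ ^ 5 := by
  calc |saddleIntegrand R θ| ≤ exp (saddleExponent R θ).re := by
        rw [saddleIntegrand, abs_mul, abs_exp]
        exact mul_le_of_le_one_right (exp_nonneg _) (abs_cos_le_one _)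
    _ ≤ exp ((5 : ℕ) * -R) := by
        gcongr
        push_cast
        linarith [saddleExponent_re_le hR hlow hθ]
    _ = (exp R)⁻¹ ^ 5 := by rw [exp_nat_mul, exp_neg]

/-! ### Gaussian moments -/

theorem integrable_pow_mul_exp_neg_half_mul_sq {s : ℝ} (hs : 0 < s) (k : ℕ) :
    Integrable fun x : ℝ => x ^ k * exp (-(s * x ^ 2 / 2)) := by
  have h := integrable_rpow_mul_exp_neg_mul_sq (half_pos hs)
    (show (-1 : ℝ) < k by linarith [k.cast_nonneg (α := ℝ)])
  simp only [rpow_natCast, neg_mul, div_mul_eq_mul_div] at h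
  exact h

theorem integral_pow_two_mul_mul_exp_neg_half_mul_sq {s : ℝ} (hs : 0 < s) (k : ℕ) :
    ∫ x : ℝ, x ^ (2 * k) * exp (-(s * x ^ 2 / 2)) = √(2 * π / s) * ((2 * k - 1)‼ / s ^ k) := by
  have habs (x : ℝ) : x ^ (2 * k) * exp (-(s * x ^ 2 / 2)) =
      |x| ^ (2 * k : ℝ) * exp (-(s / 2) * |x| ^ (2 : ℝ)) := by
    rw [rpow_two, sq_abs, show (2 * k : ℝ) = (2 * k : ℕ) by norm_num, rpow_natCast,
      (even_two_mul k).pow_abs]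
    ring_nf
  simp only [habs]
  rw [integral_comp_abs (f := fun x => x ^ (2 * k : ℝ) * exp (-(s / 2) * x ^ (2 : ℝ))),
    integral_rpow_mul_exp_neg_mul_rpow two_pos
      (by linarith [k.cast_nonneg (α := ℝ)]) (half_pos hs),
    show (2 * k + 1 : ℝ) / 2 = k + 1 / 2 by ring, Gamma_nat_add_half, neg_div,
    show (2 * k + 1 : ℝ) / 2 = k + 1 / 2 by ring, rpow_neg (by positivity),
    rpow_add (by positivity), rpow_natCast, ← sqrt_eq_rpow]
  rw [show 2 * π / s = π / (s / 2) by field_simp, sqrt_div pi_pos.le, div_pow]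
  field_simp

section EvenPolynomial

variable {s : ℝ} (hs : 0 < s) {m : ℕ} (c : Fin m → ℝ)
include hs

theorem integrable_even_polynomial_mul_exp :
    Integrable fun x : ℝ => (∑ k, c k * x ^ (2 * k : ℕ)) * exp (-(s * x ^ 2 / 2)) := by
  simp only [sum_mul, mul_assoc]
  exact integrable_finsetSum _ fun k _ =>
    (integrable_pow_mul_exp_neg_half_mul_sq hs (2 * k)).const_mul (c k)

theorem integral_even_polynomial_mul_exp :
    ∫ x : ℝ, (∑ k, c k * x ^ (2 * k : ℕ)) * exp (-(s * x ^ 2 / 2)) =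
      √(2 * π / s) * ∑ k : Fin m, c k * ((2 * k - 1 : ℕ)‼ / s ^ (k : ℕ)) := by
  simp only [sum_mul, mul_assoc]
  rw [integral_finsetSum _ fun (k : Fin m) _ =>
    (integrable_pow_mul_exp_neg_half_mul_sq hs (2 * k)).const_mul (c k), mul_sum]
  refine Finset.sum_congr rfl fun k _ => ?_
  rw [integral_const_mul, integral_pow_two_mul_mul_exp_neg_half_mul_sq hs,
    mul_left_comm]

end EvenPolynomial

/-- The coefficient of `exp (-R)` in the saddle-point expansion of `Bell n / E n`. -/
noncomputable def saddleCorrection (R : ℝ) : ℝ :=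
  (3 * touchard R 4 * touchard R 2 - 12 * touchard R 2 ^ 2 + 12 * touchard R 3 * touchard R 2 -
    5 * touchard R 3 ^ 2) / (24 * touchard R 2 ^ 3)

theorem saddleCorrection_nonpos {R : ℝ} (hR : 5 ≤ R) : saddleCorrection R ≤ 0 := by
  obtain ⟨r, hr, rfl⟩ := exists_nonneg_add_of_le hR
  rw [saddleCorrection, touchard_two, touchard_three, touchard_four]
  refine div_nonpos_of_nonpos_of_nonneg (neg_nonneg.mp ?_) (by positivity)
  ring_nf
  positivity

theorem le_saddleCorrection {R : ℝ} (hR : 5 ≤ R) : -(1 / 12) + 0.28 / R ≤ saddleCorrection R := by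
  obtain ⟨r, hr, rfl⟩ := exists_nonneg_add_of_le hR
  rw [saddleCorrection, touchard_two, touchard_three, touchard_four, le_div_iff₀ (by positivity)]
  calc (-(1 / 12) + 0.28 / (5 + r)) * (24 * (5 + r + (5 + r) ^ 2) ^ 3)
      = (-2 * (5 + r) + 6.72) * ((5 + r) ^ 2 * (1 + (5 + r)) ^ 3) := by
        field_simp
        ring
    _ ≤ _ := by
        rw [← sub_nonneg]
        ring_nf
        positivity

theorem gaussianApprox_eq (R θ : ℝ) :
    gaussianApprox R θ =
      (∑ k : Fin 4, ![1, -1 / 2, exp R * (touchard R 4 / 24 + touchard R 3 / 6),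
        -(exp R * touchard R 3) ^ 2 / 72] k * θ ^ (2 * k : ℕ)) *
        exp (-(exp R * touchard R 2 * θ ^ 2 / 2)) := by
  simp [gaussianApprox, scaledSq, Fin.sum_univ_succ]
  ring

theorem gaussianMajorant_eq (R θ : ℝ) :
    gaussianMajorant R θ =
      (∑ k : Fin 7, (exp R)⁻¹ ^ 2 * ![0, 0, 0.00005, 0.012, 0.0112, 0.0019, 0.000088] k *
        (exp R * touchard R 2) ^ (k : ℕ) * θ ^ (2 * k : ℕ)) *
        exp (-((20 / 21) ^ 2 * (exp R * touchard R 2) * θ ^ 2 / 2)) := by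
  simp [gaussianMajorant, majorantPoly, scaledSq, Fin.sum_univ_succ]
  ring_nf

section GaussianIntegrals

variable {R : ℝ} (hR : 0 < R)
include hR

theorem exp_mul_touchard_two_pos : 0 < exp R * touchard R 2 :=
  mul_pos (exp_pos R) (touchard_pos hR 2)

theorem integrable_gaussianApprox : Integrable (gaussianApprox R) := by
  simp only [funext (gaussianApprox_eq R)]
  exact integrable_even_polynomial_mul_exp (exp_mul_touchard_two_pos hR) _

theorem integral_gaussianApprox :
    ∫ θ, gaussianApprox R θ =
      √(2 * π / (exp R * touchard R 2)) * (1 + saddleCorrection R * (exp R)⁻¹) := by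
  have := touchard_pos hR 2
  simp only [gaussianApprox_eq]
  rw [integral_even_polynomial_mul_exp (exp_mul_touchard_two_pos hR), saddleCorrection]
  congr 1
  simp [Fin.sum_univ_succ, Nat.doubleFactorial]
  field_simp
  ring

theorem integrable_gaussianMajorant : Integrable (gaussianMajorant R) := by
  have := exp_mul_touchard_two_pos hR
  simp only [funext (gaussianMajorant_eq R)]
  exact integrable_even_polynomial_mul_exp (by positivity) _

theorem integral_gaussianMajorant_le :
    ∫ θ, gaussianMajorant R θ ≤
      √(2 * π / (exp R * touchard R 2)) * (6.9 * (exp R)⁻¹ ^ 2) := by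
  have hσ := exp_mul_touchard_two_pos hR
  have hsqrt : √(2 * π / ((20 / 21) ^ 2 * (exp R * touchard R 2))) =
      √(2 * π / (exp R * touchard R 2)) * (21 / 20) := by
    rw [mul_comm ((20 / 21 : ℝ) ^ 2), ← div_div, sqrt_div' _ (by positivity),
      sqrt_sq (by norm_num)]
    ring
  simp only [gaussianMajorant_eq]
  rw [integral_even_polynomial_mul_exp (by positivity), hsqrt, mul_assoc]
  refine mul_le_mul_of_nonneg_left ?_ (sqrt_nonneg _)
  generalize exp R * touchard R 2 = σ at hσ
  simp [Fin.sum_univ_succ, Nat.doubleFactorial]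
  field_simp
  norm_num

end GaussianIntegrals

/-! ### The relative error for `742 ≤ n` -/

section SaddlePoint

variable {R : ℝ} (hR : 5 ≤ R)
include hR

theorem abs_indicator_saddleIntegrand_sub_gaussianApprox_le (θ : ℝ) :
    |(Ioc (-π) π).indicator (saddleIntegrand R) θ - gaussianApprox R θ| ≤
      gaussianMajorant R θ + (Ioc (-π) π).indicator (fun _ => (exp R)⁻¹ ^ 5) θ := by
  by_cases hθ : θ ∈ Ioc (-π) π
  · rw [indicator_of_mem hθ, indicator_of_mem hθ]
    rcases le_total (R * |θ|) 0.7 with hnear | hfar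
    · have hP : 0 ≤ (exp R)⁻¹ ^ 5 := by positivity
      linarith [abs_saddleIntegrand_sub_gaussianApprox_le hR hnear]
    · linarith [abs_sub (saddleIntegrand R θ) (gaussianApprox R θ),
        abs_gaussianApprox_le_gaussianMajorant hR hfar,
        abs_saddleIntegrand_le hR hfar (abs_le.mpr ⟨hθ.1.le, hθ.2⟩)]
  · have hfar : 1 ≤ |θ| := by
      contrapose! hθ
      have := abs_lt.mp hθ
      exact ⟨by linarith [pi_gt_three], by linarith [pi_gt_three]⟩
    rw [indicator_of_notMem hθ, indicator_of_notMem hθ, zero_sub, abs_neg, add_zero]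
    exact abs_gaussianApprox_le_gaussianMajorant hR (by nlinarith)

theorem abs_integral_saddleIntegrand_sub_le :
    |(∫ θ in -π..π, saddleIntegrand R θ) -
        √(2 * π / (exp R * touchard R 2)) * (1 + saddleCorrection R * (exp R)⁻¹)| ≤
      √(2 * π / (exp R * touchard R 2)) * (6.9 * (exp R)⁻¹ ^ 2) + 2 * π * (exp R)⁻¹ ^ 5 := by
  have hR0 : 0 < R := by linarith
  have hπ : -π ≤ π := by linarith [pi_pos]
  have integrable_indicator_of_continuous {f : ℝ → ℝ} (hf : Continuous f) :
      Integrable ((Ioc (-π) π).indicator f) :=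
    (integrable_indicator_iff measurableSet_Ioc).mpr hf.integrableOn_Ioc
  have hF := integrable_indicator_of_continuous (continuous_saddleIntegrand R)
  have hC := integrable_indicator_of_continuous (continuous_const (y := (exp R)⁻¹ ^ 5))
  have hG := integrable_gaussianApprox hR0
  have hM := integrable_gaussianMajorant hR0
  calc |(∫ θ in -π..π, saddleIntegrand R θ) -
        √(2 * π / (exp R * touchard R 2)) * (1 + saddleCorrection R * (exp R)⁻¹)|
      = |∫ θ, (Ioc (-π) π).indicator (saddleIntegrand R) θ - gaussianApprox R θ| := by
        rw [integral_sub hF hG, integral_gaussianApprox hR0,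
          integral_indicator measurableSet_Ioc, intervalIntegral.integral_of_le hπ]
    _ ≤ ∫ θ, |(Ioc (-π) π).indicator (saddleIntegrand R) θ - gaussianApprox R θ| :=
        abs_integral_le_integral_abs
    _ ≤ ∫ θ, (gaussianMajorant R θ + (Ioc (-π) π).indicator (fun _ => (exp R)⁻¹ ^ 5) θ) :=
        integral_mono (hF.sub hG).abs (hM.add hC)
          (abs_indicator_saddleIntegrand_sub_gaussianApprox_le hR)
    _ = (∫ θ, gaussianMajorant R θ) + 2 * π * (exp R)⁻¹ ^ 5 := by
        rw [integral_add hM hC, integral_indicator measurableSet_Ioc,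
          ← intervalIntegral.integral_of_le hπ, intervalIntegral.integral_const, smul_eq_mul]
        ring
    _ ≤ _ := by
        gcongr
        exact integral_gaussianMajorant_le hR0

theorem two_pi_le_sqrt_mul_exp :
    2 * π ≤ √(2 * π / (exp R * touchard R 2)) * (3 * exp R) := by
  have hσ := exp_mul_touchard_two_pos (show 0 < R by linarith)
  have hT : touchard R 2 ≤ exp R := by
    rw [touchard_two]
    nlinarith [mul_quadratic_le_exp hR, sq_nonneg (R - 5)]
  have hexp : 2 * π * (exp R * touchard R 2) ≤ (3 * exp R) ^ 2 :=
    calc 2 * π * (exp R * touchard R 2) ≤ 2 * 3.15 * (exp R * exp R) := by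
          gcongr
          exact pi_lt_d2.le
      _ ≤ (3 * exp R) ^ 2 := by nlinarith [sq_nonneg (exp R)]
  calc 2 * π = √((2 * π) ^ 2) := (sqrt_sq (by positivity)).symm
    _ ≤ √(2 * π / (exp R * touchard R 2) * (3 * exp R) ^ 2) := by
        gcongr
        rw [div_mul_eq_mul_div, le_div_iff₀ hσ]
        nlinarith [pi_pos]
    _ = _ := by rw [sqrt_mul (by positivity), sqrt_sq (by positivity)]

theorem abs_sub_one_le_of_saddle_estimate {x : ℝ}
    (hx : |x - (1 + saddleCorrection R * (exp R)⁻¹)| ≤ 7 * (exp R)⁻¹ ^ 2) :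
    |x - 1| ≤ (exp R)⁻¹ / 11 := by
  have hP : 0 < (exp R)⁻¹ := by positivity
  have hP148 : 148 * (exp R)⁻¹ ≤ 1 := by
    rw [mul_inv_le_iff₀ (exp_pos R)]
    linarith [le_exp_of_five_le hR]
  have hlower : -(1 / 12) + 7 * (exp R)⁻¹ ≤ saddleCorrection R := by
    have : 7 * (exp R)⁻¹ ≤ 0.28 / R := by
      rw [← div_eq_mul_inv, div_le_div_iff₀ (exp_pos R) (by linarith)]
      nlinarith [mul_quadratic_le_exp hR, sq_nonneg (R - 5)]
    linarith [le_saddleCorrection hR]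
  have hupper := saddleCorrection_nonpos hR
  rw [abs_le] at hx ⊢
  constructor <;> nlinarith

end SaddlePoint

theorem integral_saddleIntegrand_lambertW (n : ℕ) :
    ∫ θ in -π..π, saddleIntegrand (lambertW (n + 1)) θ =
      √(2 * π / (exp (lambertW (n + 1)) * touchard (lambertW (n + 1)) 2)) * (Bell n / E n) := by
  have hx : (0 : ℝ) < n + 1 := by positivity
  have hW := lambertW_mul_exp hx.le
  have hR := lambertW_pos hx
  rw [integral_saddleIntegrand hR hW, E]
  set R := lambertW (n + 1)
  have hσ : exp R * touchard R 2 = (n + 1) * (R + 1) := by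
    rw [touchard_two, ← hW]
    ring
  have hsqrt : √(2 * π / ((n + 1) * (R + 1))) * √(2 * π * (n + 1) * (R + 1)) = 2 * π := by
    rw [← sqrt_mul (by positivity), sqrt_eq_iff_mul_self_eq (by positivity) two_pi_pos.le]
    field_simp
  rw [hσ]
  nth_rw 1 [← hsqrt]
  field_simp

theorem five_le_lambertW {x : ℝ} (hx : 743 ≤ x) : 5 ≤ lambertW x := by
  rw [le_lambertW_iff (by linarith) (by norm_num)]
  calc 5 * exp 5 = 5 * exp 1 ^ 5 := by rw [← exp_nat_mul]; norm_num
    _ ≤ 5 * 2.7182818286 ^ 5 := by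
        gcongr
        exact exp_one_lt_d9.le
    _ ≤ x := by linarith

theorem abs_Bell_div_E_sub_one_le_of_ge {n : ℕ} (hn : 742 ≤ n) :
    |Bell n / E n - 1| ≤ exp (-lambertW (n + 1)) / 11 := by
  have hR : 5 ≤ lambertW (n + 1) := five_le_lambertW (by norm_cast; lia)
  have hint := abs_integral_saddleIntegrand_sub_le hR
  rw [integral_saddleIntegrand_lambertW] at hint
  rw [exp_neg]
  refine abs_sub_one_le_of_saddle_estimate hR ?_
  have htail := two_pi_le_sqrt_mul_exp hR
  have hexp := le_exp_of_five_le hR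
  have hσ := exp_mul_touchard_two_pos (show 0 < lambertW (n + 1) by linarith)
  set R := lambertW (n + 1)
  have hZ : 0 < √(2 * π / (exp R * touchard R 2)) := by positivity
  set Z := √(2 * π / (exp R * touchard R 2))
  refine le_of_mul_le_mul_left ?_ hZ
  calc Z * |Bell n / E n - (1 + saddleCorrection R * (exp R)⁻¹)|
      = |Z * (Bell n / E n) - Z * (1 + saddleCorrection R * (exp R)⁻¹)| := by
        rw [← mul_sub, abs_mul, abs_of_pos hZ]
    _ ≤ Z * (6.9 * (exp R)⁻¹ ^ 2) + Z * (3 * exp R) * (exp R)⁻¹ ^ 5 := by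
        refine hint.trans ?_
        gcongr
    _ = Z * ((6.9 + 3 * (exp R)⁻¹ ^ 2) * (exp R)⁻¹ ^ 2) := by
        field_simp
    _ ≤ Z * ((6.9 + 3 * (148 : ℝ)⁻¹ ^ 2) * (exp R)⁻¹ ^ 2) := by gcongr
    _ ≤ Z * (7 * (exp R)⁻¹ ^ 2) := by
        gcongr
        norm_num

theorem stmt_1 (n : ℕ) (hn : 11 ≤ n) :
    |(Bell n : ℝ) / E n - 1| ≤ Real.exp (-(lambertW (n + 1))) / 11 ∧
      Real.exp (-(lambertW (n + 1))) / 11 ≤ Real.log n / (11 * n) := by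
  constructor
  · rcases le_or_gt n 741 with hsmall | hlarge
    · exact abs_Bell_div_E_sub_one_le_of_le hn hsmall
    · exact abs_Bell_div_E_sub_one_le_of_ge hlarge
  · have he : exp 1 ≤ n := by
      have : (11 : ℝ) ≤ n := mod_cast hn
      linarith [exp_one_lt_d9]
    calc exp (-lambertW (n + 1)) / 11 ≤ log n / n / 11 := by
          gcongr
          exact exp_neg_lambertW_le_log_div he (by linarith)
      _ = log n / (11 * n) := by rw [div_div, mul_comm]
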